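/- Let 1 < p < 3 and q > 1. Let F ∈ C¹(ℝ) be nonnegative with F(0) = F′(0) = 0, and suppose there exists δ₀ ∈ (0,1) such that F(u) ≥ δ₀ (ln(1/|u|))^{1−p} |u| for all 0 < |u| < δ₀ and F(u) ≥ δ₀ |u|^q for all |u| > 1/δ₀. Let τ₀ > 0 and let u₁ : [0,∞) → ℝ be a continuous, nonnegative, compactly supported function with u₁(λ) ≥ 1 for all λ ∈ [τ₀, 3τ₀]. Then for every ε > 0 there is no continuous function u : [0,∞) × [0,∞) → ℝ satisfying the integral equation u(t,r) = ε I(t,r,u₁) + ∫_0^t I(t−τ, r, F∘u(τ,·)) dτ for all t ≥ 0 and r > 0; i.e., the solution blows up in finite time. -/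

import Mathlib

open MeasureTheory intervalIntegral

/-- The radial form, at geodesic radius `r` and time `t`, of the solution of the shifted
wave equation on the hyperbolic plane with data `u(0) = 0`, `∂ₜu(0) = φ`. -/
noncomputable def Isol (t r : ℝ) (φ : ℝ → ℝ) : ℝ :=
  (1 / (Real.pi * Real.sqrt 2)) *
    ∫ s in (0 : ℝ)..t, ∫ l in |r - s|..(r + s),
      φ l * Real.sinh l * Real.sinh s *
        ((Real.cosh t - Real.cosh s) * (Real.cosh (r + s) - Real.cosh l) *
          (Real.cosh l - Real.cosh (r - s))) ^ (-(1 / 2) : ℝ)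

/-!
The kernel of `Isol` is bounded below, inside the light cone, by `exp (-(r / 2))` times the area
density, so `u` is at least a multiple of `exp (-(r / 2))` times the weighted mass of the source in
any set it can see. If some strip of unit width between incoming characteristics carried a large
mass, `u` would be large on a whole unit time interval near the origin, where the power lower bound
on `F` forces blow-up. Hence the mass in the backward cone `τ + l < x` grows at most linearly in
`x`, and `u` is small, in measure, along every line `l = const` with `l ∈ [N, 2N]`. There the
logarithmic bound gives `F u ≥ g u` with `g` of size `N ^ (1 - p)`. Starting from the linear lower
bound along the first outgoing characteristics, each of the `n + 2` windows of size `h ~ N` improves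
the amplitude by a factor of order `g h² ~ N ^ (3 - p)`. As `p < 3`, finitely many windows produce
more than linear mass, a contradiction.
-/

namespace ShiftedWave

open Set Real Filter Topology Function

section Hyperbolic

variable {b d l r s t x : ℝ}

lemma cosh_le_exp (hx : 0 ≤ x) : cosh x ≤ exp x := by
  rw [cosh_eq]
  linarith [exp_le_exp.2 (neg_le_self hx)]

lemma exp_div_eight_le_cosh_sub_one (hb : 1 ≤ b) : exp b / 8 ≤ cosh b - 1 := by
  rw [cosh_eq]
  linarith [exp_pos (-b), exp_le_exp.2 hb, exp_one_gt_d9]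

lemma one_div_four_le_sinh_mul_exp_neg (hl : 1 ≤ l) : 1 / 4 ≤ sinh l * exp (-l) := by
  have h1 : exp l * exp (-l) = 1 := by rw [← exp_add, add_neg_cancel, exp_zero]
  have h2 : 2 ≤ exp l := by linarith [add_one_le_exp l]
  have h3 : exp (-l) ≤ 1 / 2 := by nlinarith [exp_pos (-l)]
  rw [sinh_eq]
  nlinarith [exp_pos (-l)]

lemma cosh_lt_cosh_of_nonneg (hx : 0 ≤ x) (h : x < t) : cosh x < cosh t :=
  cosh_strictMonoOn hx (hx.trans h.le) h

lemma convexOn_cosh : ConvexOn ℝ univ cosh := by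
  have hneg : ConvexOn ℝ univ fun x => exp (-x) := by
    simpa [Function.comp_def] using convexOn_exp.comp_linearMap (-LinearMap.id)
  have h := (convexOn_exp.add hneg).smul (show (0 : ℝ) ≤ 2⁻¹ by norm_num)
  refine h.congr fun x _ => ?_
  simp [cosh_eq, smul_eq_mul]
  ring

lemma cosh_sub_one_mul_le (hx : 0 ≤ x) (hxb : x ≤ b) (hb : 0 < b) :
    (cosh b - 1) * (b - x) / b ≤ cosh b - cosh x := by
  have h := convexOn_cosh.2 (mem_univ 0) (mem_univ b)
    (show 0 ≤ 1 - x / b by rw [sub_nonneg, div_le_one hb]; exact hxb) (div_nonneg hx hb.le)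
    (by ring)
  simp only [smul_eq_mul, mul_zero, zero_add, cosh_zero, mul_one, div_mul_cancel₀ x hb.ne'] at h
  calc (cosh b - 1) * (b - x) / b = cosh b - (1 - x / b + x / b * cosh b) := by field_simp; ring
    _ ≤ cosh b - cosh x := by linarith

lemma self_mul_sinh_le (hs : 0 ≤ s) : s * sinh s ≤ (2 + s) * (cosh s - 1) := by
  obtain ⟨a, rfl⟩ : ∃ a, s = 2 * a := ⟨s / 2, by ring⟩
  have ha : 0 ≤ a := by linarith
  have hsinh : a ≤ sinh a := self_le_sinh_iff.2 ha
  have hcosh : cosh a - sinh a ≤ 1 := by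
    rw [cosh_sub_sinh]
    exact exp_le_one_iff.2 (by linarith)
  have hhalf : a * cosh a ≤ (1 + a) * sinh a := by nlinarith
  rw [sinh_two_mul, cosh_two_mul, cosh_sq]
  nlinarith [mul_le_mul_of_nonneg_right hhalf (ha.trans hsinh)]

lemma sinh_mul_sub_div_le_cosh_sub_cosh (hd : 0 ≤ d) (hds : d < s) :
    sinh s * (s - d) / (2 + s) ≤ cosh s - cosh d := by
  have hs : 0 < s := hd.trans_lt hds
  refine le_trans ?_ (cosh_sub_one_mul_le hd hds.le hs)
  rw [div_le_div_iff₀ (by linarith) hs]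
  nlinarith [mul_le_mul_of_nonneg_right (self_mul_sinh_le hs.le) (sub_nonneg.2 hds.le)]

lemma sinh_mul_sub_le_cosh_sub_cosh (hst : s ≤ t) : sinh s * (t - s) ≤ cosh t - cosh s := by
  rcases hst.eq_or_lt with rfl | h
  · simp
  have h := convexOn_cosh.le_slope_of_hasDerivAt (mem_univ s) (mem_univ t) h (hasDerivAt_cosh s)
  rwa [slope_def_field, le_div_iff₀ (by linarith)] at h

lemma cosh_sub_mul_cosh_sub_comm (r s l : ℝ) :
    (cosh (r + s) - cosh l) * (cosh l - cosh (r - s)) =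
      (cosh (r + l) - cosh s) * (cosh s - cosh (r - l)) := by
  simp only [cosh_add, cosh_sub]
  linear_combination (sinh l ^ 2 - sinh s ^ 2) * cosh_sq r +
    (1 - cosh r ^ 2) * cosh_sq s + (cosh r ^ 2 - 1) * cosh_sq l

lemma sq_mul_le_cosh_sub_mul_cosh_sub (hb : 1 ≤ b) (hd : 0 ≤ d) (hdx : d < x) (hxb : x < b) :
    (exp (b / 2) / (3 * (2 + b))) ^ 2 * sinh x * ((b - x) * (x - d)) ≤
      (cosh b - cosh x) * (cosh x - cosh d) := by
  have hx : 0 < x := hd.trans_lt hdx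
  have : 0 < sinh x := sinh_pos_iff.2 hx
  have hxd : 0 < x - d := sub_pos.2 hdx
  have hbx : 0 < b - x := sub_pos.2 hxb
  have hleft : exp b / 8 * (b - x) / b ≤ cosh b - cosh x :=
    le_trans (by gcongr; exact exp_div_eight_le_cosh_sub_one hb)
      (cosh_sub_one_mul_le hx.le hxb.le (hx.trans hxb))
  have hright : sinh x * (x - d) / (2 + b) ≤ cosh x - cosh d :=
    le_trans (by gcongr) (sinh_mul_sub_div_le_cosh_sub_cosh hd hdx)
  have hexp : exp (b / 2) ^ 2 = exp b := by rw [← exp_nat_mul]; push_cast; ring_nf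
  calc _ = exp b * (sinh x * ((b - x) * (x - d))) / (9 * (2 + b) * (2 + b)) := by
        rw [div_pow, hexp]; ring
    _ ≤ exp b * (sinh x * ((b - x) * (x - d))) / (8 * b * (2 + b)) := by gcongr <;> linarith
    _ = exp b / 8 * (b - x) / b * (sinh x * (x - d) / (2 + b)) := by field_simp
    _ ≤ _ := mul_le_mul hleft hright (by positivity) ((by positivity : (0 : ℝ) ≤ _).trans hleft)

end Hyperbolic

section SingularIntegrals

lemma lintegral_Ioo_inv_sqrt {c : ℝ} (hc : 0 ≤ c) :
    ∫⁻ x in Ioo 0 c, ENNReal.ofReal (√x)⁻¹ = ENNReal.ofReal (2 * √c) := by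
  have hderiv : ∀ x ∈ Ioo 0 c, HasDerivAt (fun x => 2 * √x) (√x)⁻¹ x := fun x hx => by
    have h := (hasDerivAt_sqrt hx.1.ne').const_mul 2
    rwa [one_div, mul_inv, mul_inv_cancel_left₀ two_ne_zero] at h
  have hcont : ContinuousOn (fun x => 2 * √x) (Icc 0 c) := by fun_prop
  have hint := integrableOn_deriv_of_nonneg hcont hderiv
    fun x _ => inv_nonneg.2 (sqrt_nonneg x)
  rw [← ofReal_integral_eq_lintegral_ofReal (hint.mono_set Ioo_subset_Ioc_self)
      (ae_of_all _ fun x => inv_nonneg.2 (sqrt_nonneg x)),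
    ← integral_Ioc_eq_integral_Ioo, ← integral_of_le hc,
    integral_eq_sub_of_hasDerivAt_of_le hc hcont hderiv
      ((intervalIntegrable_iff_integrableOn_Ioc_of_le hc).2 hint)]
  simp

lemma lintegral_Ioo_inv_sqrt_sub_left {a c : ℝ} (hac : a ≤ c) :
    ∫⁻ x in Ioo a c, ENNReal.ofReal (√(x - a))⁻¹ = ENNReal.ofReal (2 * √(c - a)) := by
  rw [← lintegral_Ioo_inv_sqrt (sub_nonneg.2 hac),
    ← (measurePreserving_sub_right volume a).setLIntegral_comp_preimage
      (s := Ioo 0 (c - a)) (f := fun x => ENNReal.ofReal (√x)⁻¹) measurableSet_Ioo (by fun_prop)]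
  simp

lemma lintegral_Ioo_inv_sqrt_sub_right {a c : ℝ} (hac : a ≤ c) :
    ∫⁻ x in Ioo a c, ENNReal.ofReal (√(c - x))⁻¹ = ENNReal.ofReal (2 * √(c - a)) := by
  rw [← lintegral_Ioo_inv_sqrt (sub_nonneg.2 hac),
    ← (Measure.measurePreserving_sub_left volume c).setLIntegral_comp_preimage
      (s := Ioo 0 (c - a)) (f := fun x => ENNReal.ofReal (√x)⁻¹) measurableSet_Ioo (by fun_prop)]
  simp

lemma inv_sqrt_mul_le {x y : ℝ} (hx : 0 < x) (hy : 0 < y) :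
    (√(x * y))⁻¹ ≤ (√(x + y))⁻¹ * ((√x)⁻¹ + (√y)⁻¹) := by
  have := sqrt_pos.2 hx
  have := sqrt_pos.2 hy
  have := sqrt_pos.2 (add_pos hx hy)
  have hsub : √(x + y) ≤ √y + √x := by
    rw [sqrt_le_left (by positivity)]
    nlinarith [sq_sqrt hx.le, sq_sqrt hy.le]
  rw [sqrt_mul hx.le]
  field_simp
  exact hsub

lemma lintegral_Ioo_inv_sqrt_mul_le (a c : ℝ) :
    ∫⁻ x in Ioo a c, ENNReal.ofReal (√((c - x) * (x - a)))⁻¹ ≤ ENNReal.ofReal 4 := by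
  rcases le_or_gt c a with hca | hac
  · simp [Ioo_eq_empty_of_le hca]
  have : 0 < √(c - a) := sqrt_pos.2 (sub_pos.2 hac)
  calc ∫⁻ x in Ioo a c, ENNReal.ofReal (√((c - x) * (x - a)))⁻¹
      ≤ ∫⁻ x in Ioo a c, ENNReal.ofReal (√(c - a))⁻¹ *
          (ENNReal.ofReal (√(c - x))⁻¹ + ENNReal.ofReal (√(x - a))⁻¹) := by
        refine setLIntegral_mono' measurableSet_Ioo fun x hx => ?_
        rw [← ENNReal.ofReal_add (by positivity) (by positivity),
          ← ENNReal.ofReal_mul (by positivity)]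
        have h := inv_sqrt_mul_le (sub_pos.2 hx.2) (sub_pos.2 hx.1)
        rw [sub_add_sub_cancel] at h
        exact ENNReal.ofReal_le_ofReal h
    _ = ENNReal.ofReal ((√(c - a))⁻¹ * (2 * √(c - a) + 2 * √(c - a))) := by
        rw [lintegral_const_mul _ (by fun_prop), lintegral_add_left (by fun_prop),
          lintegral_Ioo_inv_sqrt_sub_right hac.le, lintegral_Ioo_inv_sqrt_sub_left hac.le,
          ← ENNReal.ofReal_add (by positivity) (by positivity),
          ← ENNReal.ofReal_mul (by positivity)]
    _ = ENNReal.ofReal 4 := by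
        congr 1
        field_simp
        norm_num

lemma lintegral_Ioo_sinh_mul_comp_cosh {a c : ℝ} (ha : 0 ≤ a) (hac : a ≤ c)
    (g : ℝ → ENNReal) :
    ∫⁻ l in Ioo a c, ENNReal.ofReal (sinh l) * g (cosh l) =
      ∫⁻ y in Ioo (cosh a) (cosh c), g y := by
  have hmono : StrictMonoOn cosh (Icc a c) :=
    cosh_strictMonoOn.mono fun x hx => ha.trans hx.1
  rw [← continuous_cosh.continuousOn.image_Ioo_of_strictMonoOn hac hmono,
    lintegral_image_eq_lintegral_deriv_mul_of_monotoneOn measurableSet_Ioo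
      (fun x _ => (hasDerivAt_cosh x).hasDerivWithinAt)
      (hmono.monotoneOn.mono Ioo_subset_Icc_self)]

end SingularIntegrals

section Kernel

variable {a l m r s t T : ℝ}

/-- The integrand of `Isol t r` without the datum, as a function of the two integration variables,
extended by zero outside the region of integration. -/
noncomputable def waveKernel (t r s l : ℝ) : ℝ :=
  if (0 < s ∧ s < t) ∧ |r - s| < l ∧ l < r + s then
    sinh l * sinh s / (π * √2 *
      √((cosh t - cosh s) * ((cosh (r + s) - cosh l) * (cosh l - cosh (r - s)))))
  else 0

/-- The kernel `K(t, r, l)` of the solution operator, `Isol t r φ = ∫ K(t, r, l) φ(l) dl`. -/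
noncomputable def radialKernel (t r l : ℝ) : ENNReal := ∫⁻ s, ENNReal.ofReal (waveKernel t r s l)

/-- The size of the kernel in its second radial variable, up to polynomial factors. -/
noncomputable def areaWeight (l : ℝ) : ℝ := sinh l * exp (-(l / 2))

lemma areaWeight_pos (hl : 0 < l) : 0 < areaWeight l := mul_pos (sinh_pos_iff.2 hl) (exp_pos _)

@[fun_prop]
lemma continuous_areaWeight : Continuous areaWeight := by
  unfold areaWeight
  fun_prop

lemma one_le_pi_mul_sqrt_two : 1 ≤ π * √2 := by
  nlinarith [pi_gt_three, one_le_sqrt.2 one_le_two]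

lemma pi_mul_sqrt_two_le : π * √2 ≤ 8 := by
  have h : √2 ≤ 2 := by rw [sqrt_le_left] <;> norm_num
  nlinarith [pi_pos, pi_le_four]

lemma abs_sub_lt_and_lt_add_comm :
    (|r - s| < l ∧ l < r + s) ↔ (|r - l| < s ∧ s < r + l) := by
  simp only [abs_lt]
  constructor <;> rintro ⟨⟨h1, h2⟩, h3⟩ <;> refine ⟨⟨?_, ?_⟩, ?_⟩ <;> linarith

lemma waveKernel_of_mem (hs : 0 < s ∧ s < t) (hl : |r - s| < l ∧ l < r + s) :
    waveKernel t r s l = sinh l * sinh s / (π * √2 *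
      √((cosh t - cosh s) * ((cosh (r + s) - cosh l) * (cosh l - cosh (r - s))))) :=
  if_pos ⟨hs, hl⟩

lemma waveKernel_of_mem' (hs : |r - l| < s ∧ s < r + l) (hst : s < t) :
    waveKernel t r s l = sinh l * sinh s / (π * √2 *
      √((cosh t - cosh s) * ((cosh (r + l) - cosh s) * (cosh s - cosh |r - l|)))) := by
  rw [waveKernel_of_mem ⟨(abs_nonneg _).trans_lt hs.1, hst⟩ (abs_sub_lt_and_lt_add_comm.2 hs),
    cosh_sub_mul_cosh_sub_comm, cosh_abs]

lemma waveKernel_eq_zero_of_notMem_time (h : ¬(0 < s ∧ s < t)) : waveKernel t r s l = 0 :=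
  if_neg fun h' => h h'.1

lemma waveKernel_eq_zero_of_notMem_triangle (h : ¬(|r - s| < l ∧ l < r + s)) :
    waveKernel t r s l = 0 :=
  if_neg fun h' => h h'.2

lemma waveKernel_nonneg (t r s l : ℝ) : 0 ≤ waveKernel t r s l := by
  unfold waveKernel
  split_ifs with h
  · have hl := sinh_nonneg_iff.2 ((abs_nonneg _).trans_lt h.2.1).le
    have hs := sinh_nonneg_iff.2 h.1.1.le
    positivity
  · exact le_rfl

@[fun_prop]
lemma measurable_waveKernel {α : Type*} [MeasurableSpace α] {t r s l : α → ℝ}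
    (ht : Measurable t) (hr : Measurable r) (hs : Measurable s) (hl : Measurable l) :
    Measurable fun x => waveKernel (t x) (r x) (s x) (l x) := by
  unfold waveKernel
  have habs : Measurable fun x => |r x - s x| := by fun_prop
  have hpos := measurableSet_lt (measurable_const (a := (0 : ℝ))) hs
  have htriangle := (measurableSet_lt habs hl).inter (measurableSet_lt hl (hr.add hs))
  exact Measurable.ite ((hpos.inter (measurableSet_lt hs ht)).inter htriangle) (by fun_prop)
    measurable_const

@[fun_prop]
lemma measurable_radialKernel {α : Type*} [MeasurableSpace α] {t r l : α → ℝ}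
    (ht : Measurable t) (hr : Measurable r) (hl : Measurable l) :
    Measurable fun x => radialKernel (t x) (r x) (l x) := by
  have h : Measurable (uncurry fun x s => ENNReal.ofReal (waveKernel (t x) (r x) s (l x))) := by
    simp only [uncurry_def]
    fun_prop
  exact h.lintegral_prod_right

lemma radialKernel_eq_zero_of_nonpos (hl : l ≤ 0) : radialKernel t r l = 0 := by
  have h : ∀ s, waveKernel t r s l = 0 := fun s =>
    waveKernel_eq_zero_of_notMem_triangle fun h => (hl.trans (abs_nonneg _)).not_gt h.1
  simp [radialKernel, h]

lemma radialKernel_eq_zero_of_le_abs_sub (h : t ≤ |r - l|) : radialKernel t r l = 0 := by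
  have h : ∀ s, waveKernel t r s l = 0 := fun s => by
    by_cases hs : 0 < s ∧ s < t
    · exact waveKernel_eq_zero_of_notMem_triangle fun hl =>
        (hs.2.trans_le h).not_gt (abs_sub_lt_and_lt_add_comm.1 hl).1
    · exact waveKernel_eq_zero_of_notMem_time hs
  simp [radialKernel, h]

lemma cosh_sub_mul_cosh_sub_le {b : ℝ} (hs : 0 ≤ s) (ht : s < t) (hb : s < b) (htm : t ≤ m)
    (hbm : b ≤ m) :
    (cosh t - cosh s) * (cosh b - cosh s) ≤ (cosh (min t b) - cosh s) * exp m := by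
  have hle : ∀ {x}, s < x → x ≤ m → 0 ≤ cosh x - cosh s ∧ cosh x - cosh s ≤ exp m :=
    fun {x} hx hxm => ⟨sub_nonneg.2 (cosh_lt_cosh_of_nonneg hs hx).le, by
      linarith [cosh_le_exp (hs.trans hx.le), exp_le_exp.2 hxm, cosh_pos s]⟩
  rcases le_total t b with h | h
  · rw [min_eq_left h]
    exact mul_le_mul_of_nonneg_left (hle hb hbm).2 (hle ht htm).1
  · rw [min_eq_right h, mul_comm]
    exact mul_le_mul_of_nonneg_left (hle ht htm).2 (hle hb hbm).1

lemma sinh_div_le_waveKernel (hl : 0 < l) (hs : |r - l| < s) (hst : s < min t (r + l))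
    (htm : t ≤ m) (hm : r + l ≤ m) :
    sinh l * exp (-(m / 2)) / 4 / (cosh (min t (r + l)) - cosh |r - l|) * sinh s ≤
      waveKernel t r s l := by
  obtain ⟨ht, hb⟩ := lt_min_iff.1 hst
  have hs0 : 0 < s := (abs_nonneg _).trans_lt hs
  have hsd := sub_pos.2 (cosh_lt_cosh_of_nonneg (abs_nonneg _) hs)
  have hcs := sub_pos.2 (cosh_lt_cosh_of_nonneg hs0.le hst)
  have hts := sub_pos.2 (cosh_lt_cosh_of_nonneg hs0.le ht)
  have hbs := sub_pos.2 (cosh_lt_cosh_of_nonneg hs0.le hb)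
  have := sinh_pos_iff.2 hl
  have := sinh_pos_iff.2 hs0
  have hprod := cosh_sub_mul_cosh_sub_le hs0.le ht hb htm hm
  rw [waveKernel_of_mem' ⟨hs, hb⟩ ht]
  set C := cosh (min t (r + l))
  set D := cosh |r - l|
  have hCD : 0 < C - D := by linarith
  have hsqrt : √((cosh t - cosh s) * ((cosh (r + l) - cosh s) * (cosh s - D))) ≤
      (C - D) / 2 * exp (m / 2) := by
    rw [sqrt_le_left (by positivity), mul_pow, ← exp_nat_mul, Nat.cast_ofNat,
      mul_div_cancel₀ m two_ne_zero, ← mul_assoc]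
    refine (mul_le_mul_of_nonneg_right hprod hsd.le).trans ?_
    rw [mul_right_comm]
    refine mul_le_mul_of_nonneg_right ?_ (exp_pos m).le
    nlinarith [sq_nonneg (C - cosh s - (cosh s - D))]
  calc sinh l * exp (-(m / 2)) / 4 / (C - D) * sinh s
      = sinh l * sinh s / (8 * ((C - D) / 2 * exp (m / 2))) := by
        rw [exp_neg]
        field_simp
        norm_num
    _ ≤ _ := by
        gcongr
        exact pi_mul_sqrt_two_le

lemma lintegral_Ioo_sinh {c d : ℝ} (hd : 0 ≤ d) (hdc : d ≤ c) :
    ∫⁻ s in Ioo d c, ENNReal.ofReal (sinh s) = ENNReal.ofReal (cosh c - cosh d) := by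
  simpa using lintegral_Ioo_sinh_mul_comp_cosh hd hdc 1

lemma areaWeight_le_radialKernel (hr : 0 < r) (hra : r ≤ a) (hl : 0 < l) (hlt : |r - l| < t)
    (hta : t ≤ l + a) :
    ENNReal.ofReal (exp (-(a / 2)) / 4 * areaWeight l) ≤ radialKernel t r l := by
  have hd : |r - l| < min t (r + l) := lt_min hlt (abs_lt.2 ⟨by linarith, by linarith⟩)
  have hCD := sub_pos.2 (cosh_lt_cosh_of_nonneg (abs_nonneg _) hd)
  have := sinh_pos_iff.2 hl
  set A := sinh l * exp (-((l + a) / 2)) / 4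
  set C := cosh (min t (r + l)) - cosh |r - l|
  calc ENNReal.ofReal (exp (-(a / 2)) / 4 * areaWeight l)
      = ENNReal.ofReal (A / C) * ∫⁻ s in Ioo |r - l| (min t (r + l)), ENNReal.ofReal (sinh s) := by
        rw [lintegral_Ioo_sinh (abs_nonneg _) hd.le, ← ENNReal.ofReal_mul (by positivity),
          div_mul_cancel₀ _ hCD.ne', areaWeight]
        simp only [A]
        rw [add_div, neg_add, exp_add]
        ring_nf
    _ = ∫⁻ s in Ioo |r - l| (min t (r + l)), ENNReal.ofReal (A / C * sinh s) := by
        rw [← lintegral_const_mul _ (by fun_prop)]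
        simp only [ENNReal.ofReal_mul (show 0 ≤ A / C by positivity)]
    _ ≤ ∫⁻ s in Ioo |r - l| (min t (r + l)), ENNReal.ofReal (waveKernel t r s l) :=
        setLIntegral_mono' measurableSet_Ioo fun s hs => ENNReal.ofReal_le_ofReal
          (sinh_div_le_waveKernel hl hs.1 hs.2 hta (by linarith))
    _ ≤ radialKernel t r l := setLIntegral_le_lintegral _ _

end Kernel

section KernelUpperBounds

variable {l r s t T τ : ℝ}

lemma waveKernel_le_inv_sqrt_mul (hb : 1 ≤ r + l) (hl : 0 < l) (hs : |r - l| < s ∧ s < r + l)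
    (hst : s < t) :
    waveKernel t r s l ≤ 3 * (2 + (r + l)) * exp (-((r + l) / 2)) * sinh l *
      ((√((r + l - s) * (s - |r - l|)))⁻¹ * (√(t - s))⁻¹) := by
  have hs0 : 0 < s := (abs_nonneg _).trans_lt hs.1
  have := sinh_pos_iff.2 hs0
  have := sinh_pos_iff.2 hl
  have hQ : 0 < (r + l - s) * (s - |r - l|) := mul_pos (sub_pos.2 hs.2) (sub_pos.2 hs.1)
  have hts := sub_pos.2 hst
  rw [waveKernel_of_mem' hs hst]
  set Q := (r + l - s) * (s - |r - l|)
  set E := exp ((r + l) / 2) / (3 * (2 + (r + l)))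
  have : 0 < E := by positivity
  have hsqrt : E * sinh s * (√Q * √(t - s)) ≤
      √((cosh t - cosh s) * ((cosh (r + l) - cosh s) * (cosh s - cosh |r - l|))) := by
    refine le_sqrt_of_sq_le ?_
    calc (E * sinh s * (√Q * √(t - s))) ^ 2 = sinh s * (t - s) * (E ^ 2 * sinh s * Q) := by
          simp only [mul_pow, sq_sqrt hQ.le, sq_sqrt hts.le]
          ring
      _ ≤ _ := mul_le_mul (sinh_mul_sub_le_cosh_sub_cosh hst.le)
          (sq_mul_le_cosh_sub_mul_cosh_sub hb (abs_nonneg _) hs.1 hs.2) (by positivity)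
          (sub_nonneg.2 (cosh_lt_cosh_of_nonneg hs0.le hst).le)
  have := sqrt_pos.2 hQ
  have := sqrt_pos.2 hts
  calc _ ≤ sinh l * sinh s / (1 * (E * sinh s * (√Q * √(t - s)))) := by
        gcongr
        exact one_le_pi_mul_sqrt_two
    _ = _ := by
        simp only [E, exp_neg]
        field_simp

lemma lintegral_waveKernel_time_le (hb : 1 ≤ r + l) (hl : 0 < l)
    (hs : |r - l| < s ∧ s < r + l) :
    ∫⁻ t in Iio T, ENNReal.ofReal (waveKernel t r s l) ≤
      ENNReal.ofReal (6 * (2 + (r + l)) * exp (-((r + l) / 2)) * sinh l * √T) *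
        ENNReal.ofReal (√((r + l - s) * (s - |r - l|)))⁻¹ := by
  have hs0 : 0 < s := (abs_nonneg _).trans_lt hs.1
  have := sinh_pos_iff.2 hl
  set D := 3 * (2 + (r + l)) * exp (-((r + l) / 2)) * sinh l * (√((r + l - s) * (s - |r - l|)))⁻¹
  calc ∫⁻ t in Iio T, ENNReal.ofReal (waveKernel t r s l)
      = ∫⁻ t in Ioo s T, ENNReal.ofReal (waveKernel t r s l) := by
        rw [← lintegral_indicator measurableSet_Iio, ← lintegral_indicator measurableSet_Ioo]
        congr with t
        by_cases hst : s < t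
        · simp [indicator, hst]
        · simp [indicator, waveKernel_eq_zero_of_notMem_time fun h : 0 < s ∧ s < t => hst h.2]
    _ ≤ ∫⁻ t in Ioo s T, ENNReal.ofReal D * ENNReal.ofReal (√(t - s))⁻¹ := by
        refine setLIntegral_mono' measurableSet_Ioo fun t ht => ?_
        rw [← ENNReal.ofReal_mul (by positivity)]
        exact ENNReal.ofReal_le_ofReal
          ((waveKernel_le_inv_sqrt_mul hb hl hs ht.1).trans_eq (mul_assoc _ _ _).symm)
    _ ≤ ENNReal.ofReal D * ENNReal.ofReal (2 * √T) := by
        rw [lintegral_const_mul _ (by fun_prop)]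
        gcongr
        rcases le_or_gt s T with h | h
        · rw [lintegral_Ioo_inv_sqrt_sub_left h]
          gcongr
          linarith
        · simp [Ioo_eq_empty_of_le h.le]
    _ = _ := by
        rw [← ENNReal.ofReal_mul (by positivity), ← ENNReal.ofReal_mul (by positivity)]
        simp only [D]
        ring_nf

lemma lintegral_radialKernel_time_le (hb : 1 ≤ r + l) (hl : 0 < l) :
    ∫⁻ t in Iio T, radialKernel t r l ≤
      ENNReal.ofReal (24 * (2 + (r + l)) * exp (-((r + l) / 2)) * sinh l * √T) := by
  have := sinh_pos_iff.2 hl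
  set D := 6 * (2 + (r + l)) * exp (-((r + l) / 2)) * sinh l * √T
  calc ∫⁻ t in Iio T, radialKernel t r l
      = ∫⁻ s, ∫⁻ t in Iio T, ENNReal.ofReal (waveKernel t r s l) :=
        lintegral_lintegral_swap (by simp only [uncurry_def]; fun_prop)
    _ ≤ ∫⁻ s, (Ioo |r - l| (r + l)).indicator (fun s => ENNReal.ofReal D *
          ENNReal.ofReal (√((r + l - s) * (s - |r - l|)))⁻¹) s := by
        refine lintegral_mono fun s => ?_
        by_cases hs : |r - l| < s ∧ s < r + l
        · rw [indicator_of_mem (show s ∈ Ioo |r - l| (r + l) from hs)]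
          exact lintegral_waveKernel_time_le hb hl hs
        · simp [waveKernel_eq_zero_of_notMem_triangle
            fun h => hs (abs_sub_lt_and_lt_add_comm.1 h)]
    _ ≤ ENNReal.ofReal D * ENNReal.ofReal 4 := by
        rw [lintegral_indicator measurableSet_Ioo, lintegral_const_mul _ (by fun_prop)]
        gcongr
        exact lintegral_Ioo_inv_sqrt_mul_le _ _
    _ = _ := by
        rw [← ENNReal.ofReal_mul (by positivity)]
        simp only [D]
        ring_nf

lemma radialKernel_sub_eq_zero (h : r + T ≤ τ + l) (ht : t ≤ T) :
    radialKernel (t - τ) r l = 0 := by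
  refine radialKernel_eq_zero_of_le_abs_sub ?_
  rw [abs_sub_comm]
  exact (show t - τ ≤ l - r by linarith).trans (le_abs_self _)

lemma lintegral_radialKernel_sub_le (hr : 1 ≤ r) (hrT : r ≤ T) (hτ : 0 ≤ τ) :
    ∫⁻ t in Ioo 0 T, radialKernel (t - τ) r l ≤
      ENNReal.ofReal (120 * T ^ 2 * exp (-(r / 2))) * ENNReal.ofReal (areaWeight l) := by
  rcases le_or_gt l 0 with hl | hl
  · simp [radialKernel_eq_zero_of_nonpos hl]
  rcases le_or_gt (r + T) (τ + l) with h | h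
  · rw [setLIntegral_eq_zero measurableSet_Ioo fun t ht => radialKernel_sub_eq_zero h ht.2.le]
    exact zero_le
  have := sinh_pos_iff.2 hl
  calc ∫⁻ t in Ioo 0 T, radialKernel (t - τ) r l
      ≤ ∫⁻ t, (Iio T).indicator (fun s => radialKernel s r l) (t - τ) := by
        rw [← lintegral_indicator measurableSet_Ioo]
        refine lintegral_mono (indicator_le fun t ht => ?_)
        rw [indicator_of_mem (show t - τ ∈ Iio T from (sub_le_self t hτ).trans_lt ht.2)]
    _ = ∫⁻ t in Iio T, radialKernel t r l := by
        rw [lintegral_sub_right_eq_self ((Iio T).indicator fun s => radialKernel s r l),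
          lintegral_indicator measurableSet_Iio]
    _ ≤ _ := lintegral_radialKernel_time_le (by linarith) hl
    _ ≤ ENNReal.ofReal (24 * (5 * T) * exp (-((r + l) / 2)) * sinh l * T) := by
        have hT : √T ≤ T := by
          rw [sqrt_le_left (by linarith)]
          nlinarith
        have hsum : 2 + (r + l) ≤ 5 * T := by linarith
        have : 0 ≤ T := by linarith
        gcongr
    _ = _ := by
        rw [← ENNReal.ofReal_mul (by positivity), areaWeight, add_div, neg_add, exp_add]
        ring_nf

lemma waveKernel_le_mul_inv_sqrt (hs : 0 < s ∧ s < t) (hl : |r - s| < l ∧ l < r + s) :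
    waveKernel t r s l ≤ sinh l * (sinh s * (√(cosh t - cosh s))⁻¹ *
      (√((cosh (r + s) - cosh l) * (cosh l - cosh |r - s|)))⁻¹) := by
  have := sinh_pos_iff.2 hs.1
  have := sinh_pos_iff.2 ((abs_nonneg _).trans_lt hl.1)
  rw [waveKernel_of_mem hs hl, cosh_abs,
    sqrt_mul (sub_nonneg.2 (cosh_lt_cosh_of_nonneg hs.1.le hs.2).le), div_eq_inv_mul,
    mul_inv (π * √2), mul_assoc (π * √2)⁻¹]
  refine (mul_le_of_le_one_left (by positivity)
    (inv_le_one_of_one_le₀ one_le_pi_mul_sqrt_two)).trans_eq ?_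
  rw [mul_inv]
  ring

lemma lintegral_waveKernel_radius_le (hr : 0 ≤ r) (hs : 0 < s ∧ s < t) :
    ∫⁻ l, ENNReal.ofReal (waveKernel t r s l) ≤
      ENNReal.ofReal (sinh s) * ENNReal.ofReal (4 * (√(cosh t - cosh s))⁻¹) := by
  have hts := sqrt_pos.2 (sub_pos.2 (cosh_lt_cosh_of_nonneg hs.1.le hs.2))
  have hsinh := sinh_pos_iff.2 hs.1
  have hrs : |r - s| ≤ r + s := abs_le.2 ⟨by linarith, by linarith [hs.1]⟩
  set D := sinh s * (√(cosh t - cosh s))⁻¹ with hD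
  calc ∫⁻ l, ENNReal.ofReal (waveKernel t r s l)
      ≤ ∫⁻ l in Ioo |r - s| (r + s), ENNReal.ofReal (sinh l) * (ENNReal.ofReal D *
          ENNReal.ofReal (√((cosh (r + s) - cosh l) * (cosh l - cosh |r - s|)))⁻¹) := by
        rw [← lintegral_indicator measurableSet_Ioo]
        refine lintegral_mono fun l => ?_
        by_cases hl : |r - s| < l ∧ l < r + s
        swap
        · simp [waveKernel_eq_zero_of_notMem_triangle hl]
        have := sinh_pos_iff.2 ((abs_nonneg _).trans_lt hl.1)
        rw [indicator_of_mem (show l ∈ Ioo |r - s| (r + s) from hl),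
          ← ENNReal.ofReal_mul (by positivity), ← ENNReal.ofReal_mul (by positivity)]
        exact ENNReal.ofReal_le_ofReal (waveKernel_le_mul_inv_sqrt hs hl)
    _ = ENNReal.ofReal D * ∫⁻ y in Ioo (cosh |r - s|) (cosh (r + s)),
          ENNReal.ofReal (√((cosh (r + s) - y) * (y - cosh |r - s|)))⁻¹ := by
        rw [← lintegral_const_mul _ (by fun_prop)]
        exact lintegral_Ioo_sinh_mul_comp_cosh (abs_nonneg _) hrs fun y => ENNReal.ofReal D *
          ENNReal.ofReal (√((cosh (r + s) - y) * (y - cosh |r - s|)))⁻¹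
    _ ≤ ENNReal.ofReal D * ENNReal.ofReal 4 := by
        gcongr
        exact lintegral_Ioo_inv_sqrt_mul_le _ _
    _ = _ := by
        rw [← ENNReal.ofReal_mul (by positivity), ← ENNReal.ofReal_mul (by positivity), hD]
        ring_nf

lemma lintegral_lintegral_waveKernel_le (hr : 0 ≤ r) (ht : 0 ≤ t) :
    ∫⁻ s, ∫⁻ l, ENNReal.ofReal (waveKernel t r s l) ≤ ENNReal.ofReal (8 * √(cosh t - 1)) := by
  calc ∫⁻ s, ∫⁻ l, ENNReal.ofReal (waveKernel t r s l)
      ≤ ∫⁻ s in Ioo 0 t, ENNReal.ofReal (sinh s) *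
          ENNReal.ofReal (4 * (√(cosh t - cosh s))⁻¹) := by
        rw [← lintegral_indicator measurableSet_Ioo]
        refine lintegral_mono fun s => ?_
        by_cases hs : 0 < s ∧ s < t
        · rw [indicator_of_mem (show s ∈ Ioo 0 t from hs)]
          exact lintegral_waveKernel_radius_le hr hs
        · simp [waveKernel_eq_zero_of_notMem_time hs]
    _ = ENNReal.ofReal 4 * ∫⁻ y in Ioo 1 (cosh t), ENNReal.ofReal (√(cosh t - y))⁻¹ := by
        rw [← lintegral_const_mul _ (by fun_prop), ← cosh_zero]
        simp only [ENNReal.ofReal_mul (show (0 : ℝ) ≤ 4 by norm_num)]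
        exact lintegral_Ioo_sinh_mul_comp_cosh le_rfl ht fun y =>
          ENNReal.ofReal 4 * ENNReal.ofReal (√(cosh t - y))⁻¹
    _ = ENNReal.ofReal (8 * √(cosh t - 1)) := by
        rw [lintegral_Ioo_inv_sqrt_sub_right (one_le_cosh t), ← ENNReal.ofReal_mul (by norm_num)]
        ring_nf

end KernelUpperBounds

section Representation

variable {B r t : ℝ} {φ ψ : ℝ → ℝ}

lemma ofReal_integral_integral {α β : Type*} [MeasurableSpace α] [MeasurableSpace β]
    {μ : Measure α} {ν : Measure β} [SFinite ν] {f : α → β → ℝ} (hf : Measurable (uncurry f))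
    (hf0 : ∀ x y, 0 ≤ f x y) (hfin : ∫⁻ x, ∫⁻ y, ENNReal.ofReal (f x y) ∂ν ∂μ ≠ ⊤) :
    ENNReal.ofReal (∫ x, ∫ y, f x y ∂ν ∂μ) = ∫⁻ x, ∫⁻ y, ENNReal.ofReal (f x y) ∂ν ∂μ := by
  have hmeas : Measurable fun x => ∫⁻ y, ENNReal.ofReal (f x y) ∂ν :=
    Measurable.lintegral_prod_right (f := fun x y => ENNReal.ofReal (f x y)) hf.ennreal_ofReal
  have hinner : ∀ x, ∫ y, f x y ∂ν = (∫⁻ y, ENNReal.ofReal (f x y) ∂ν).toReal := fun x =>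
    integral_eq_lintegral_of_nonneg_ae (ae_of_all _ (hf0 x)) hf.of_uncurry_left.aestronglyMeasurable
  simp only [hinner]
  rw [integral_toReal hmeas.aemeasurable (ae_lt_top hmeas hfin), ENNReal.ofReal_toReal hfin]

lemma Isol_eq_integral_waveKernel (ht : 0 ≤ t) (hr : 0 ≤ r) (φ : ℝ → ℝ) :
    Isol t r φ = ∫ s, ∫ l, φ l * waveKernel t r s l := by
  simp only [Isol, ← intervalIntegral.integral_const_mul]
  rw [integral_of_le ht, integral_Ioc_eq_integral_Ioo,
    ← MeasureTheory.integral_indicator measurableSet_Ioo]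
  congr with s
  by_cases hs : 0 < s ∧ s < t
  swap
  · rw [indicator_of_notMem (show s ∉ Ioo 0 t from hs)]
    simp [waveKernel_eq_zero_of_notMem_time hs]
  rw [indicator_of_mem (show s ∈ Ioo 0 t from hs),
    integral_of_le (abs_le.2 ⟨by linarith [hs.1], by linarith [hs.1]⟩),
    integral_Ioc_eq_integral_Ioo, ← MeasureTheory.integral_indicator measurableSet_Ioo]
  congr with l
  by_cases hl : |r - s| < l ∧ l < r + s
  swap
  · rw [indicator_of_notMem (show l ∉ Ioo |r - s| (r + s) from hl),
      waveKernel_eq_zero_of_notMem_triangle hl, mul_zero]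
  have h1 := sub_nonneg.2 (cosh_lt_cosh_of_nonneg hs.1.le hs.2).le
  have h2 := sub_nonneg.2 (cosh_lt_cosh_of_nonneg ((abs_nonneg _).trans_lt hl.1).le hl.2).le
  have h3 := sub_nonneg.2 (cosh_lt_cosh_of_nonneg (abs_nonneg _) hl.1).le
  rw [cosh_abs] at h3
  rw [indicator_of_mem (show l ∈ Ioo |r - s| (r + s) from hl), waveKernel_of_mem hs hl,
    rpow_neg (by positivity), ← sqrt_eq_rpow, mul_assoc (cosh t - cosh s)]
  ring

lemma Isol_congr (ht : 0 ≤ t) (hr : 0 ≤ r) (h : ∀ l, 0 < l → φ l = ψ l) :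
    Isol t r φ = Isol t r ψ := by
  rw [Isol_eq_integral_waveKernel ht hr, Isol_eq_integral_waveKernel ht hr]
  congr with s
  congr with l
  by_cases hl : 0 < l
  · rw [h l hl]
  · rw [waveKernel_eq_zero_of_notMem_triangle fun h => hl ((abs_nonneg _).trans_lt h.1), mul_zero,
      mul_zero]

lemma Isol_const_mul (t r c : ℝ) (φ : ℝ → ℝ) : Isol t r (fun l => c * φ l) = c * Isol t r φ := by
  simp only [Isol, mul_assoc, intervalIntegral.integral_const_mul]
  ring

lemma Isol_nonneg (ht : 0 ≤ t) (hr : 0 ≤ r) (hφ0 : ∀ l, 0 ≤ φ l) : 0 ≤ Isol t r φ := by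
  rw [Isol_eq_integral_waveKernel ht hr]
  exact integral_nonneg fun s => integral_nonneg fun l =>
    mul_nonneg (hφ0 l) (waveKernel_nonneg _ _ _ _)

lemma lintegral_lintegral_mul_waveKernel (hφ : Measurable φ) (hφ0 : ∀ l, 0 ≤ φ l) :
    ∫⁻ s, ∫⁻ l, ENNReal.ofReal (φ l * waveKernel t r s l) =
      ∫⁻ l, ENNReal.ofReal (φ l) * radialKernel t r l := by
  rw [lintegral_lintegral_swap (by simp only [uncurry_def]; fun_prop)]
  refine lintegral_congr fun l => ?_
  rw [radialKernel, ← lintegral_const_mul _ (by fun_prop)]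
  exact lintegral_congr fun s => ENNReal.ofReal_mul (hφ0 l)

lemma lintegral_mul_radialKernel_le (ht : 0 ≤ t) (hr : 0 ≤ r)
    (hB : ∀ l ∈ Icc 0 (r + t), φ l ≤ B) :
    ∫⁻ l, ENNReal.ofReal (φ l) * radialKernel t r l ≤
      ENNReal.ofReal B * ENNReal.ofReal (8 * √(cosh t - 1)) := by
  calc ∫⁻ l, ENNReal.ofReal (φ l) * radialKernel t r l
      ≤ ∫⁻ l, ENNReal.ofReal B * radialKernel t r l := by
        refine lintegral_mono fun l => ?_
        by_cases hl : l ∈ Icc 0 (r + t)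
        · dsimp only
          gcongr
          exact hB l hl
        · have hzero : radialKernel t r l = 0 := by
            rcases le_or_gt l 0 with h | h
            · exact radialKernel_eq_zero_of_nonpos h
            · refine radialKernel_eq_zero_of_le_abs_sub (le_abs.2 (Or.inr ?_))
              linarith [lt_of_not_ge fun h' => hl ⟨h.le, h'⟩]
          simp [hzero]
    _ = ENNReal.ofReal B * ∫⁻ s, ∫⁻ l, ENNReal.ofReal (waveKernel t r s l) := by
        rw [lintegral_const_mul _ (by fun_prop)]
        congr 1
        simpa using (lintegral_lintegral_mul_waveKernel (t := t) (r := r) measurable_const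
          fun _ => zero_le_one' ℝ).symm
    _ ≤ _ := by
        gcongr
        exact lintegral_lintegral_waveKernel_le hr ht

lemma ofReal_Isol (ht : 0 ≤ t) (hr : 0 ≤ r) (hφ : Continuous φ) (hφ0 : ∀ l, 0 ≤ φ l) :
    ENNReal.ofReal (Isol t r φ) = ∫⁻ l, ENNReal.ofReal (φ l) * radialKernel t r l := by
  obtain ⟨B, hB⟩ := isCompact_Icc.bddAbove_image (hφ.continuousOn (s := Icc 0 (r + t)))
  have hle := lintegral_mul_radialKernel_le ht hr fun l hl => hB (mem_image_of_mem φ hl)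
  rw [Isol_eq_integral_waveKernel ht hr, ← lintegral_lintegral_mul_waveKernel hφ.measurable hφ0]
  have := hφ.measurable
  refine ofReal_integral_integral (by simp only [uncurry_def]; fun_prop)
    (fun s l => mul_nonneg (hφ0 l) (waveKernel_nonneg _ _ _ _)) ?_
  rw [lintegral_lintegral_mul_waveKernel hφ.measurable hφ0]
  exact ne_top_of_le_ne_top (by finiteness) hle

lemma ofReal_integral_Isol {f : ℝ → ℝ → ℝ} (ht : 0 ≤ t) (hr : 0 ≤ r)
    (hf : Continuous (uncurry f)) (hf0 : ∀ τ l, 0 ≤ f τ l) :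
    ENNReal.ofReal (∫ τ in (0 : ℝ)..t, Isol (t - τ) r (f τ)) =
      ∫⁻ τ in Ioo 0 t, ∫⁻ l, ENNReal.ofReal (f τ l) * radialKernel (t - τ) r l := by
  obtain ⟨B, hB⟩ := (isCompact_Icc.prod isCompact_Icc).bddAbove_image
    (hf.continuousOn (s := Icc 0 t ×ˢ Icc 0 (r + t)))
  set G : ℝ → ENNReal := fun τ => ∫⁻ l, ENNReal.ofReal (f τ l) * radialKernel (t - τ) r l
  have hG : Measurable G := by
    have := hf.measurable
    refine Measurable.lintegral_prod_right (f := fun τ l =>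
      ENNReal.ofReal (uncurry f (τ, l)) * radialKernel (t - τ) r l) ?_
    simp only [uncurry_def]
    fun_prop
  have hGIsol : ∀ τ ∈ Ioo 0 t, Isol (t - τ) r (f τ) = (G τ).toReal := fun τ hτ => by
    have hτt : 0 ≤ t - τ := sub_nonneg.2 hτ.2.le
    simp only [G]
    rw [← ofReal_Isol hτt hr (hf.uncurry_left τ) (hf0 τ),
      ENNReal.toReal_ofReal (Isol_nonneg hτt hr (hf0 τ))]
  have hGle : ∀ τ ∈ Ioo 0 t, G τ ≤ ENNReal.ofReal B * ENNReal.ofReal (8 * √(cosh t - 1)) := by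
    intro τ hτ
    refine (lintegral_mul_radialKernel_le (sub_nonneg.2 hτ.2.le) hr fun l hl =>
      hB (mem_image_of_mem _ (⟨⟨hτ.1.le, hτ.2.le⟩, hl.1, by linarith [hl.2, hτ.1]⟩ :
        (τ, l) ∈ Icc 0 t ×ˢ Icc 0 (r + t)))).trans ?_
    gcongr
    exact cosh_strictMonoOn.monotoneOn (sub_nonneg.2 hτ.2.le) ht (sub_le_self t hτ.1.le)
  have hGfin : ∫⁻ τ in Ioo 0 t, G τ ≠ ⊤ :=
    ne_top_of_le_ne_top (by rw [setLIntegral_const, volume_Ioo]; finiteness)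
      (setLIntegral_mono' measurableSet_Ioo hGle)
  rw [integral_of_le ht, integral_Ioc_eq_integral_Ioo,
    setIntegral_congr_fun measurableSet_Ioo hGIsol,
    integral_toReal hG.aemeasurable (ae_lt_top hG hGfin), ENNReal.ofReal_toReal hGfin]

end Representation

section MildSolution

variable {t r : ℝ} {F φ : ℝ → ℝ} {u : ℝ → ℝ → ℝ}

/-- `u` is a global continuous mild solution of the shifted wave equation with nonlinearity `F` and
initial data `u(0) = 0`, `∂ₜu(0) = φ`. Only the values of `u` at nonnegative times and radii are
meaningful. -/
structure IsMildSolution (F φ : ℝ → ℝ) (u : ℝ → ℝ → ℝ) : Prop where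
  continuousOn : ContinuousOn (uncurry u) (Ici 0 ×ˢ Ici 0)
  eq : ∀ t, 0 ≤ t → ∀ r, 0 < r →
    u t r = Isol t r φ + ∫ τ in (0 : ℝ)..t, Isol (t - τ) r (fun l => F (u τ l))

lemma IsMildSolution.exists_continuous (hu : IsMildSolution F φ u) :
    ∃ v, Continuous (uncurry v) ∧ IsMildSolution F φ v := by
  have hcont : Continuous (uncurry fun t r => u (max t 0) (max r 0)) :=
    hu.continuousOn.comp_continuous (f := fun z : ℝ × ℝ => (max z.1 0, max z.2 0)) (by fun_prop)
      fun z => by simp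
  refine ⟨_, hcont, hcont.continuousOn, fun t ht r hr => ?_⟩
  simp only [max_eq_left ht, max_eq_left hr.le, hu.eq t ht r hr]
  congr 1
  refine integral_congr fun τ hτ => ?_
  rw [uIcc_of_le ht] at hτ
  refine Isol_congr (sub_nonneg.2 hτ.2) hr.le fun l hl => ?_
  simp only [max_eq_left hτ.1, max_eq_left hl.le]

/-- The measure `F(u(τ, l)) dτ dl` on the half-space `τ > 0`. -/
noncomputable def sourceMeasure (F : ℝ → ℝ) (u : ℝ → ℝ → ℝ) : Measure (ℝ × ℝ) :=
  ((volume.restrict (Ioi 0)).prod volume).withDensity fun z => ENNReal.ofReal (F (u z.1 z.2))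

/-- The initial velocity `φ`, as a measure `φ(l) dl` concentrated on the line `τ = 0`. -/
noncomputable def dataMeasure (φ : ℝ → ℝ) : Measure (ℝ × ℝ) :=
  (volume.withDensity fun l => ENNReal.ofReal (φ l)).map (Prod.mk 0)

/-- `u` is the retarded potential `u(t, r) = ∫ K(t - τ, r, l) dν(τ, l)` of the nonnegative forcing
`ν`, which is switched on at time `0`. -/
structure IsRetardedPotential (ν : Measure (ℝ × ℝ)) (u : ℝ → ℝ → ℝ) : Prop where
  sFinite : SFinite ν
  ae_nonneg : ∀ᵐ z ∂ν, 0 ≤ z.1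
  eq : ∀ t, 0 ≤ t → ∀ r, 0 < r →
    ENNReal.ofReal (u t r) = ∫⁻ z, radialKernel (t - z.1) r z.2 ∂ν

lemma lintegral_dataMeasure (hφ : Measurable φ) {f : ℝ × ℝ → ENNReal} (hf : Measurable f) :
    ∫⁻ z, f z ∂dataMeasure φ = ∫⁻ l, ENNReal.ofReal (φ l) * f (0, l) := by
  rw [dataMeasure, lintegral_map hf (by fun_prop),
    lintegral_withDensity_eq_lintegral_mul _ hφ.ennreal_ofReal (by fun_prop)]
  rfl

lemma lintegral_sourceMeasure (hF : Measurable F) (hu : Measurable (uncurry u))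
    {f : ℝ × ℝ → ENNReal} (hf : Measurable f) :
    ∫⁻ z, f z ∂sourceMeasure F u =
      ∫⁻ τ in Ioi 0, ∫⁻ l, ENNReal.ofReal (F (u τ l)) * f (τ, l) := by
  have hFu : Measurable fun z : ℝ × ℝ => ENNReal.ofReal (F (u z.1 z.2)) :=
    (hF.comp hu).ennreal_ofReal
  rw [sourceMeasure, lintegral_withDensity_eq_lintegral_mul _ hFu hf,
    lintegral_prod _ (hFu.mul hf).aemeasurable]
  rfl

lemma IsMildSolution.isRetardedPotential (hu : IsMildSolution F φ u)
    (huc : Continuous (uncurry u)) (hF : Continuous F) (hF0 : ∀ v, 0 ≤ F v)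
    (hφ : Continuous φ) (hφ0 : ∀ l, 0 ≤ φ l) :
    IsRetardedPotential (dataMeasure φ + sourceMeasure F u) u where
  sFinite := by
    unfold dataMeasure sourceMeasure
    infer_instance
  ae_nonneg := by
    refine ae_add_measure_iff.2 ⟨?_, ?_⟩
    · refine (ae_map_iff (by fun_prop) (measurableSet_le measurable_const measurable_fst)).2 ?_
      exact ae_of_all _ fun _ => le_rfl
    · refine (withDensity_absolutelyContinuous _ _).ae_le ?_
      have h : ∀ᵐ τ ∂volume.restrict (Ioi (0 : ℝ)), 0 ≤ τ :=
        (ae_restrict_mem measurableSet_Ioi).mono fun τ hτ => le_of_lt hτ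
      exact Measure.quasiMeasurePreserving_fst.ae h
  eq t ht r hr := by
    have hK : Measurable fun z : ℝ × ℝ => radialKernel (t - z.1) r z.2 := by fun_prop
    have hduhamel : 0 ≤ ∫ τ in (0 : ℝ)..t, Isol (t - τ) r (fun l => F (u τ l)) :=
      integral_nonneg ht fun τ hτ => Isol_nonneg (sub_nonneg.2 hτ.2) hr.le fun l => hF0 _
    rw [hu.eq t ht r hr, ENNReal.ofReal_add (Isol_nonneg ht hr.le hφ0) hduhamel,
      ofReal_Isol ht hr.le hφ hφ0, ofReal_integral_Isol (f := fun τ l => F (u τ l)) ht hr.le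
        (hF.comp huc) fun _ _ => hF0 _,
      lintegral_add_measure, lintegral_dataMeasure hφ.measurable hK,
      lintegral_sourceMeasure hF.measurable huc.measurable hK]
    simp only [sub_zero]
    congr 1
    rw [← lintegral_indicator measurableSet_Ioo, ← lintegral_indicator measurableSet_Ioi]
    congr with τ
    by_cases hτ : τ < t
    · simp [indicator, hτ]
    · have hzero : ∀ l, radialKernel (t - τ) r l = 0 := fun l =>
        radialKernel_eq_zero_of_le_abs_sub (by linarith [abs_nonneg (r - l)])
      simp [indicator, hτ, hzero]

end MildSolution

section AreaMass

variable {a m r t δ : ℝ} {F φ : ℝ → ℝ} {u : ℝ → ℝ → ℝ} {ν : Measure (ℝ × ℝ)} {S : Set (ℝ × ℝ)}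

/-- The forcing `ν` weighted by the size of the kernel: the quantity that the retarded potential of
`ν` controls from above and from below. -/
noncomputable def areaMass (ν : Measure (ℝ × ℝ)) : Measure (ℝ × ℝ) :=
  ν.withDensity fun z => ENNReal.ofReal (areaWeight z.2)

lemma areaMass_apply (hS : MeasurableSet S) :
    areaMass ν S = ∫⁻ z in S, ENNReal.ofReal (areaWeight z.2) ∂ν :=
  withDensity_apply _ hS

lemma areaMass_mono {μ : Measure (ℝ × ℝ)} (h : μ ≤ ν) (hS : MeasurableSet S) :
    areaMass μ S ≤ areaMass ν S := by
  rw [areaMass_apply hS, areaMass_apply hS]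
  exact lintegral_mono' (Measure.restrict_mono_measure h S) le_rfl

lemma areaMass_sourceMeasure (hF : Measurable F) (hu : Measurable (uncurry u))
    (hS : MeasurableSet S) (hS0 : ∀ z ∈ S, 0 < z.1) :
    areaMass (sourceMeasure F u) S =
      ∫⁻ z in S, ENNReal.ofReal (F (u z.1 z.2)) * ENNReal.ofReal (areaWeight z.2) := by
  have hFu : Measurable fun z : ℝ × ℝ => ENNReal.ofReal (F (u z.1 z.2)) :=
    (hF.comp hu).ennreal_ofReal
  have hrestrict : (((volume : Measure ℝ).restrict (Ioi 0)).prod volume).restrict S =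
      (volume : Measure (ℝ × ℝ)).restrict S := by
    have hprod := Measure.prod_restrict (μ := (volume : Measure ℝ))
      (ν := (volume : Measure ℝ)) (Ioi 0) univ
    rw [Measure.restrict_univ] at hprod
    rw [hprod, Measure.restrict_restrict hS, inter_eq_left.2
      (show S ⊆ Ioi 0 ×ˢ univ from fun z hz => ⟨hS0 z hz, mem_univ _⟩)]
    rfl
  rw [areaMass_apply hS, sourceMeasure, restrict_withDensity hS,
    lintegral_withDensity_eq_lintegral_mul _ hFu (by fun_prop), hrestrict]
  rfl

lemma IsRetardedPotential.exp_mul_le (hν : IsRetardedPotential ν u) (ht : 0 ≤ t) (hr : 0 < r)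
    (hra : r ≤ a) (hS : MeasurableSet S)
    (hcone : ∀ z ∈ S, 0 < z.2 ∧ |r - z.2| < t - z.1 ∧ t - z.1 ≤ z.2 + a)
    (hm : 0 < m) (hmS : ENNReal.ofReal m ≤ areaMass ν S) :
    exp (-(a / 2)) / 4 * m ≤ u t r := by
  refine (ENNReal.ofReal_le_ofReal_iff'.1 ?_).resolve_right (not_le.2 (by positivity))
  rw [hν.eq t ht r hr, ENNReal.ofReal_mul (by positivity)]
  calc ENNReal.ofReal (exp (-(a / 2)) / 4) * ENNReal.ofReal m
      ≤ ENNReal.ofReal (exp (-(a / 2)) / 4) * areaMass ν S := by gcongr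
    _ = ∫⁻ z in S, ENNReal.ofReal (exp (-(a / 2)) / 4 * areaWeight z.2) ∂ν := by
        rw [areaMass_apply hS, ← lintegral_const_mul _ (by fun_prop)]
        exact lintegral_congr fun z => (ENNReal.ofReal_mul (by positivity)).symm
    _ ≤ ∫⁻ z in S, radialKernel (t - z.1) r z.2 ∂ν :=
        setLIntegral_mono' hS fun z hz => areaWeight_le_radialKernel hr hra (hcone z hz).1
          (hcone z hz).2.1 (hcone z hz).2.2
    _ ≤ _ := setLIntegral_le_lintegral _ _

lemma exists_pos_ofReal_le_areaMass_dataMeasure (hφ : Continuous φ) {l : ℝ} (hl : 0 < l)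
    (hφl : 0 < φ l) :
    ∃ m > 0, ENNReal.ofReal m ≤ areaMass (dataMeasure φ) ({0} ×ˢ Ioo 0 (l + 1)) := by
  have hS : MeasurableSet ({0} ×ˢ Ioo 0 (l + 1) : Set (ℝ × ℝ)) :=
    (measurableSet_singleton _).prod measurableSet_Ioo
  have := hφ.measurable
  have hmass : areaMass (dataMeasure φ) ({0} ×ˢ Ioo 0 (l + 1)) =
      ∫⁻ x in Ioo 0 (l + 1), ENNReal.ofReal (φ x) * ENNReal.ofReal (areaWeight x) := by
    rw [areaMass_apply hS, ← lintegral_indicator hS, lintegral_dataMeasure hφ.measurable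
      ((by fun_prop : Measurable fun z : ℝ × ℝ => ENNReal.ofReal (areaWeight z.2)).indicator hS),
      ← lintegral_indicator measurableSet_Ioo]
    congr with x
    by_cases hx : x ∈ Ioo 0 (l + 1) <;> simp [indicator, hx]
  have hpos : 0 < areaMass (dataMeasure φ) ({0} ×ˢ Ioo 0 (l + 1)) := by
    rw [hmass, setLIntegral_pos_iff (by fun_prop)]
    have hopen : IsOpen ({x | 0 < φ x} ∩ Ioo 0 (l + 1)) :=
      (isOpen_lt continuous_const hφ).inter isOpen_Ioo
    refine (hopen.measure_pos volume ⟨l, hφl, hl, lt_add_one l⟩).trans_le (measure_mono ?_)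
    rintro x ⟨hx, hxl⟩
    refine ⟨?_, hxl⟩
    simpa [mem_support] using ⟨hx, areaWeight_pos hxl.1⟩
  obtain ⟨m, -, hm0, hm⟩ := ENNReal.lt_iff_exists_real_btwn.1 hpos
  exact ⟨m, ENNReal.ofReal_pos.1 hm0, hm.le⟩

lemma IsRetardedPotential.exists_exp_le (hν : IsRetardedPotential ν u) (hle : dataMeasure φ ≤ ν)
    (hφ : Continuous φ) (hφpos : ∃ l > 0, 0 < φ l) :
    ∃ c > 0, ∃ R, ∀ t r, R < t → 0 < r → r ≤ t → c * exp (-(t / 2)) ≤ u t r := by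
  obtain ⟨l, hl, hφl⟩ := hφpos
  obtain ⟨m, hm, hmS⟩ := exists_pos_ofReal_le_areaMass_dataMeasure hφ hl hφl
  have hS : MeasurableSet ({0} ×ˢ Ioo 0 (l + 1) : Set (ℝ × ℝ)) :=
    (measurableSet_singleton _).prod measurableSet_Ioo
  refine ⟨m / 4, by positivity, l + 1, fun t r ht hr hrt => ?_⟩
  refine (hν.exp_mul_le (by linarith) hr hrt hS ?_ hm (hmS.trans (areaMass_mono hle hS))).trans_eq'
    (by ring)
  rintro ⟨τ, x⟩ ⟨rfl, hx⟩
  exact ⟨hx.1, abs_lt.2 ⟨by linarith [hx.2], by linarith [hx.1]⟩, by linarith [hx.1]⟩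

end AreaMass

section LocalBlowUp

variable {a b c h m q r t y : ℝ} {F : ℝ → ℝ} {u : ℝ → ℝ → ℝ} {ν : Measure (ℝ × ℝ)}

lemma mul_exp_neg_le_areaWeight {l : ℝ} (hl : 0 ≤ l) (hlb : l ≤ b) :
    l * exp (-(b / 2)) ≤ areaWeight l := by
  unfold areaWeight
  gcongr
  exact self_le_sinh_iff.2 hl

/-- One step of the iteration for local blow-up: a lower bound on a truncated backward light cone
improves on a slightly later one. -/
lemma IsRetardedPotential.mul_le_of_forall_le (hν : IsRetardedPotential ν u)
    (hle : sourceMeasure F u ≤ ν) (hF : Measurable F) (hu : Measurable (uncurry u))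
    (ha : 0 ≤ a) (hb : b ≤ a + 1) (hh : 0 < h) (hh1 : h ≤ 1) (hy : 0 < y)
    (hFy : ∀ v, m ≤ v → y ≤ F v)
    (hum : ∀ t r, a ≤ t → t ≤ b → 0 < r → r ≤ 1 + b - t → m ≤ u t r)
    (hat : a + h ≤ t) (htb : t ≤ b) (hr : 0 < r) (hrb : r ≤ 1 + b - t) :
    exp (-(5 / 2)) / 128 * y * h ^ 3 ≤ u t r := by
  set S := Ioo a (a + h / 2) ×ˢ Ioo (r + h / 4) (r + h / 2)
  have hS : MeasurableSet S := measurableSet_Ioo.prod measurableSet_Ioo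
  have hcone : ∀ z ∈ S, 0 < z.2 ∧ |r - z.2| < t - z.1 ∧ t - z.1 ≤ z.2 + 2 := by
    rintro ⟨τ, l⟩ ⟨⟨h1, h2⟩, h3, h4⟩
    dsimp only at *
    exact ⟨by linarith, abs_lt.2 ⟨by linarith, by linarith⟩, by linarith⟩
  have hmass : ENNReal.ofReal (y * (h / 4 * exp (-(3 / 2))) * (h / 2 * (h / 4))) ≤
      areaMass ν S := by
    have hvol : volume S = ENNReal.ofReal (h / 2 * (h / 4)) := by
      rw [Measure.volume_eq_prod, Measure.prod_prod, volume_Ioo, volume_Ioo,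
        ← ENNReal.ofReal_mul (by linarith)]
      ring_nf
    refine le_trans ?_ (areaMass_mono hle hS)
    rw [areaMass_sourceMeasure hF hu hS fun z hz => ha.trans_lt hz.1.1,
      ENNReal.ofReal_mul (by positivity), ← hvol, ← setLIntegral_const]
    refine setLIntegral_mono' hS ?_
    rintro ⟨τ, l⟩ ⟨⟨h1, h2⟩, h3, h4⟩
    dsimp only at *
    rw [ENNReal.ofReal_mul hy.le]
    gcongr
    · exact hFy _ (hum τ l h1.le (by linarith) (by linarith) (by linarith))
    · refine le_trans ?_ (mul_exp_neg_le_areaWeight (b := 3) (by linarith) (by linarith))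
      gcongr
      linarith
  refine (hν.exp_mul_le (by linarith) hr (by linarith) hS hcone (by positivity) hmass).trans_eq' ?_
  rw [show -(5 / 2 : ℝ) = -(2 / 2) + -(3 / 2) by norm_num, exp_add]
  ring

/-- Superlinear growth beats the shrinking of the time steps: with `Λ ^ (q - 1) = 8`, the factor
`8 ^ k` gained from the `q`-th power pays for the cubes of the steps `2⁻ᵏ`. -/
lemma exists_one_lt_eventually_mul_pow_le (hq : 1 < q) (hc : 0 < c) :
    ∃ Λ > 1, ∀ᶠ M in atTop, ∀ k : ℕ,
      M * Λ ^ (k + 1) ≤ c * (M * Λ ^ k) ^ q * ((1 / 2) ^ (k + 1)) ^ 3 := by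
  have hq' : 0 < q - 1 := sub_pos.2 hq
  obtain ⟨Λ, hΛ1, hΛ8⟩ : ∃ Λ : ℝ, 1 < Λ ∧ Λ ^ (q - 1) = 8 :=
    ⟨8 ^ (q - 1)⁻¹, one_lt_rpow (by norm_num) (by positivity),
      rpow_inv_rpow (by norm_num) hq'.ne'⟩
  refine ⟨Λ, hΛ1, ?_⟩
  filter_upwards [(tendsto_rpow_atTop hq').eventually_ge_atTop (8 * Λ / c),
    eventually_gt_atTop 0] with M hM hM0 k
  rw [div_le_iff₀ hc] at hM
  have hpow : (M * Λ ^ k) ^ q = M ^ (q - 1) * 8 ^ k * (M * Λ ^ k) := by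
    rw [← sub_add_cancel q 1, rpow_add_one (by positivity), add_sub_cancel_right,
      mul_rpow (by positivity) (by positivity), ← rpow_natCast Λ, ← rpow_mul (by positivity),
      mul_comm (k : ℝ), rpow_mul (by positivity), hΛ8, rpow_natCast]
  have hcube : 8 ^ k * ((1 / 2 : ℝ) ^ (k + 1)) ^ 3 = 1 / 8 := by
    rw [pow_right_comm, pow_succ, ← mul_assoc, ← mul_pow]
    norm_num
  calc M * Λ ^ (k + 1) = 8 * Λ * (M * Λ ^ k) * (1 / 8) := by ring
    _ ≤ M ^ (q - 1) * c * (M * Λ ^ k) * (1 / 8) := by gcongr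
    _ = _ := by
        rw [hpow, ← hcube]
        ring

lemma IsRetardedPotential.exists_not_forall_le (hν : IsRetardedPotential ν u)
    (hle : sourceMeasure F u ≤ ν) (hF : Measurable F) (hu : Measurable (uncurry u)) {K δ : ℝ}
    (hq : 1 < q) (hδ : 0 < δ) (hFq : ∀ v, K < v → δ * v ^ q ≤ F v) :
    ∃ M > 0, ∀ T, 0 ≤ T → ¬∀ t r, T ≤ t → t ≤ T + 1 → 0 < r → r ≤ 2 → M ≤ u t r := by
  obtain ⟨Λ, hΛ, hev⟩ := exists_one_lt_eventually_mul_pow_le hq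
    (show 0 < exp (-(5 / 2)) / 128 * δ by positivity)
  obtain ⟨M, hMpow, hM0, hMK⟩ :=
    (hev.and ((eventually_gt_atTop 0).and (eventually_gt_atTop K))).exists
  refine ⟨M, hM0, fun T hT hMu => ?_⟩
  have hiter : ∀ k : ℕ, ∀ t r, T + 1 - (1 / 2) ^ k ≤ t → t ≤ T + 1 → 0 < r →
      r ≤ 1 + (T + 1) - t → M * Λ ^ k ≤ u t r := by
    intro k
    induction k with
    | zero =>
      intro t r h1 h2 h3 h4
      rw [pow_zero] at h1
      rw [pow_zero, mul_one]
      exact hMu t r (by linarith) h2 h3 (by linarith)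
    | succ k ih =>
      intro t r h1 h2 h3 h4
      have hk1 : (1 / 2 : ℝ) ^ k ≤ 1 := pow_le_one₀ (by norm_num) (by norm_num)
      have hsucc : (1 / 2 : ℝ) ^ (k + 1) = (1 / 2) ^ k / 2 := by ring
      have hMΛ : M ≤ M * Λ ^ k := le_mul_of_one_le_right hM0.le (one_le_pow₀ hΛ.le)
      refine (hMpow k).trans ((hν.mul_le_of_forall_le hle hF hu (m := M * Λ ^ k)
        (h := (1 / 2) ^ (k + 1)) (y := δ * (M * Λ ^ k) ^ q) (by linarith) (by linarith)
        (by positivity) (by linarith) (by positivity) (fun v hv => ?_) ih (by linarith) h2 h3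
        h4).trans_eq' (by ring))
      refine le_trans ?_ (hFq v (by linarith))
      gcongr
  obtain ⟨k, hk⟩ := ((tendsto_pow_atTop_atTop_of_one_lt hΛ).eventually_gt_atTop
    (u (T + 1) 1 / M)).exists
  rw [div_lt_iff₀' hM0] at hk
  have hpow : (0 : ℝ) < (1 / 2) ^ k := by positivity
  exact hk.not_ge (hiter k (T + 1) 1 (by linarith) le_rfl one_pos (by linarith))

end LocalBlowUp

section UpperBound

variable {r T x y : ℝ} {F : ℝ → ℝ} {u : ℝ → ℝ → ℝ} {ν : Measure (ℝ × ℝ)}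

/-- The points `(τ, l)` of the quadrant `τ ≥ 0`, `l > 0` with `x ≤ τ + l < y`: a strip between two
incoming characteristics. -/
def incomingStrip (x y : ℝ) : Set (ℝ × ℝ) :=
  {z | (0 ≤ z.1 ∧ 0 < z.2) ∧ x ≤ z.1 + z.2 ∧ z.1 + z.2 < y}

lemma measurableSet_incomingStrip : MeasurableSet (incomingStrip x y) := by
  unfold incomingStrip
  measurability

lemma incomingStrip_zero_subset (x : ℝ) :
    incomingStrip 0 x ⊆ ⋃ i ∈ Finset.range ⌈x⌉₊, incomingStrip (i : ℝ) (i + 1) := by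
  rintro z ⟨hz, h0, hx⟩
  have hfloor := Nat.floor_le h0
  refine mem_iUnion₂.2 ⟨⌊z.1 + z.2⌋₊, Finset.mem_range.2 ?_, hz, hfloor, Nat.lt_floor_add_one _⟩
  exact Nat.lt_ceil.2 (hfloor.trans_lt hx)

/-- A heavy strip would make `u` large on the whole region where the local blow-up argument
starts. -/
lemma IsRetardedPotential.exists_areaMass_incomingStrip_le (hν : IsRetardedPotential ν u)
    (hu : ∃ M > 0, ∀ T, 0 ≤ T → ¬∀ t r, T ≤ t → t ≤ T + 1 → 0 < r → r ≤ 2 → M ≤ u t r) :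
    ∃ C > 0, ∀ x, 0 ≤ x → areaMass ν (incomingStrip x (x + 1)) ≤ ENNReal.ofReal C := by
  obtain ⟨M, hM, hMu⟩ := hu
  refine ⟨M / (exp (-(4 / 2)) / 4), by positivity, fun x hx => ?_⟩
  by_contra! hlt
  refine hMu (x + 3) (by positivity) fun t r h1 h2 h3 h4 => ?_
  refine (hν.exp_mul_le (a := 4) (by linarith) h3 (by linarith) measurableSet_incomingStrip ?_
    (by positivity) hlt.le).trans_eq' (by field_simp)
  rintro z ⟨⟨_, hz2⟩, hx1, hx2⟩
  exact ⟨hz2, abs_lt.2 ⟨by linarith, by linarith⟩, by linarith⟩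

lemma areaMass_incomingStrip_zero_le {C : ℝ} (hC : 0 ≤ C)
    (hν : ∀ x, 0 ≤ x → areaMass ν (incomingStrip x (x + 1)) ≤ ENNReal.ofReal C) (hx : 0 ≤ x) :
    areaMass ν (incomingStrip 0 x) ≤ ENNReal.ofReal (C * (x + 1)) := by
  calc areaMass ν (incomingStrip 0 x)
      ≤ ∑ i ∈ Finset.range ⌈x⌉₊, areaMass ν (incomingStrip (i : ℝ) (i + 1)) :=
        (measure_mono (incomingStrip_zero_subset x)).trans (measure_biUnion_finset_le _ _)
    _ ≤ ∑ _i ∈ Finset.range ⌈x⌉₊, ENNReal.ofReal C :=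
        Finset.sum_le_sum fun i _ => hν i i.cast_nonneg
    _ = ENNReal.ofReal (C * ⌈x⌉₊) := by
        rw [Finset.sum_const, Finset.card_range, nsmul_eq_mul, mul_comm,
          ENNReal.ofReal_mul hC, ENNReal.ofReal_natCast]
    _ ≤ _ := by
        gcongr
        exact (Nat.ceil_lt_add_one hx).le

lemma IsRetardedPotential.lintegral_Ioo_le (hν : IsRetardedPotential ν u) (hr : 1 ≤ r)
    (hrT : r ≤ T) :
    ∫⁻ t in Ioo 0 T, ENNReal.ofReal (u t r) ≤
      ENNReal.ofReal (120 * T ^ 2 * exp (-(r / 2))) * areaMass ν (incomingStrip 0 (r + T)) := by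
  have := hν.sFinite
  calc ∫⁻ t in Ioo 0 T, ENNReal.ofReal (u t r)
      = ∫⁻ t in Ioo 0 T, ∫⁻ z, radialKernel (t - z.1) r z.2 ∂ν :=
        setLIntegral_congr_fun measurableSet_Ioo fun t ht => hν.eq t ht.1.le r (by linarith)
    _ = ∫⁻ z, (∫⁻ t in Ioo 0 T, radialKernel (t - z.1) r z.2) ∂ν :=
        lintegral_lintegral_swap (by simp only [uncurry_def]; fun_prop)
    _ ≤ ∫⁻ z, (incomingStrip 0 (r + T)).indicator (fun z => ENNReal.ofReal
          (120 * T ^ 2 * exp (-(r / 2))) * ENNReal.ofReal (areaWeight z.2)) z ∂ν := by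
        refine lintegral_mono_ae (hν.ae_nonneg.mono fun z hz => ?_)
        by_cases hz' : z ∈ incomingStrip 0 (r + T)
        · rw [indicator_of_mem hz']
          exact lintegral_radialKernel_sub_le hr hrT hz
        rw [setLIntegral_eq_zero measurableSet_Ioo fun t ht => ?_]
        · exact zero_le
        rcases le_or_gt z.2 0 with h | h
        · exact radialKernel_eq_zero_of_nonpos h
        · refine radialKernel_sub_eq_zero (not_lt.1 fun hlt => hz' ?_) ht.2.le
          exact ⟨⟨hz, h⟩, by linarith, hlt⟩
    _ = _ := by
        rw [lintegral_indicator measurableSet_incomingStrip, lintegral_const_mul _ (by fun_prop),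
          areaMass_apply measurableSet_incomingStrip]

lemma IsRetardedPotential.exists_lintegral_Ioo_le (hν : IsRetardedPotential ν u) {C : ℝ}
    (hC : 0 < C)
    (hmass : ∀ x, 0 ≤ x → areaMass ν (incomingStrip 0 x) ≤ ENNReal.ofReal (C * (x + 1))) :
    ∃ D > 0, ∀ r T, 1 ≤ r → r ≤ T →
      ∫⁻ t in Ioo 0 T, ENNReal.ofReal (u t r) ≤ ENNReal.ofReal (D * T ^ 3 * exp (-(r / 2))) := by
  refine ⟨360 * C, by positivity, fun r T hr hrT => (hν.lintegral_Ioo_le hr hrT).trans ?_⟩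
  have : 0 ≤ T := by linarith
  calc _ ≤ ENNReal.ofReal (120 * T ^ 2 * exp (-(r / 2))) * ENNReal.ofReal (C * (3 * T)) := by
        gcongr
        refine (hmass _ (by linarith)).trans ?_
        gcongr
        linarith
    _ = _ := by
        rw [← ENNReal.ofReal_mul (by positivity)]
        ring_nf

lemma eventually_volume_setOf_le {D δ : ℝ} (hu : Measurable (uncurry u)) (hδ : 0 < δ)
    (hD : 0 < D) (hint : ∀ r T, 1 ≤ r → r ≤ T →
      ∫⁻ t in Ioo 0 T, ENNReal.ofReal (u t r) ≤ ENNReal.ofReal (D * T ^ 3 * exp (-(r / 2)))) :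
    ∀ᶠ N in atTop, ∀ l ∈ Icc N (2 * N),
      volume {τ ∈ Ioo 0 (3 * N) | δ ≤ u τ l} ≤ ENNReal.ofReal (1 / 2) := by
  have hlim : Tendsto (fun N : ℝ => 216 * D * ((N / 2) ^ 3 * exp (-(N / 2)))) atTop (𝓝 0) := by
    simpa using ((tendsto_pow_mul_exp_neg_atTop_nhds_zero 3).comp
      (tendsto_id.atTop_div_const two_pos)).const_mul (216 * D)
  filter_upwards [hlim.eventually_lt_const (half_pos hδ), eventually_ge_atTop 1]
    with N hN hN1 l hl
  have hmarkov := meas_ge_le_lintegral_div (μ := volume.restrict (Ioo 0 (3 * N)))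
    (hu.of_uncurry_right (y := l)).ennreal_ofReal.aemeasurable
    (ENNReal.ofReal_pos.2 hδ).ne' ENNReal.ofReal_ne_top
  rw [Measure.restrict_apply' measurableSet_Ioo] at hmarkov
  calc volume {τ ∈ Ioo 0 (3 * N) | δ ≤ u τ l}
      ≤ volume ({τ | ENNReal.ofReal δ ≤ ENNReal.ofReal (u τ l)} ∩ Ioo 0 (3 * N)) :=
        measure_mono fun τ hτ => ⟨ENNReal.ofReal_le_ofReal hτ.2, hτ.1⟩
    _ ≤ _ := hmarkov
    _ ≤ ENNReal.ofReal (D * (3 * N) ^ 3 * exp (-(l / 2))) / ENNReal.ofReal δ := by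
        gcongr
        exact hint l (3 * N) (by linarith [hl.1]) (by linarith [hl.2])
    _ ≤ ENNReal.ofReal (1 / 2) := by
        rw [← ENNReal.ofReal_div_of_pos hδ]
        refine ENNReal.ofReal_le_ofReal ((div_le_iff₀ hδ).2 ?_)
        calc D * (3 * N) ^ 3 * exp (-(l / 2)) ≤ D * (3 * N) ^ 3 * exp (-(N / 2)) := by
              gcongr
              exact hl.1
          _ = 216 * D * ((N / 2) ^ 3 * exp (-(N / 2))) := by ring
          _ ≤ 1 / 2 * δ := by linarith

end UpperBound

section WeakNonlinearity

variable {p δ : ℝ} {F : ℝ → ℝ} {u : ℝ → ℝ → ℝ}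

lemma exists_mul_rpow_neg_mul_le (hp : p < 3) (hδ : 0 < δ) (hδ1 : δ < 1)
    (hF : ∀ v, 0 < v → v < δ → δ * log (1 / v) ^ (1 - p) * v ≤ F v) :
    ∃ γ > 0, ∃ α < (2 : ℝ), ∀ v T, 0 < v → v < δ → log (1 / v) ≤ T →
      γ * T ^ (-α) * v ≤ F v := by
  have hL₀ : 0 < log (1 / δ) := log_pos ((one_lt_div hδ).2 hδ1)
  set α := max (p - 1) 0
  refine ⟨δ * log (1 / δ) ^ (α - (p - 1)), by positivity, α, max_lt (by linarith) two_pos,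
    fun v T hv hvδ hvT => le_trans ?_ (hF v hv hvδ)⟩
  have hL : log (1 / δ) ≤ log (1 / v) := by gcongr
  have hL0 := hL₀.trans_le hL
  calc δ * log (1 / δ) ^ (α - (p - 1)) * T ^ (-α) * v
      ≤ δ * log (1 / v) ^ (α - (p - 1)) * log (1 / v) ^ (-α) * v := by
        have hT : 0 < T := hL0.trans_le hvT
        gcongr δ * ?_ * ?_ * v
        · exact rpow_le_rpow hL₀.le hL (sub_nonneg.2 (le_max_left _ _))
        · exact rpow_le_rpow_of_nonpos hL0 hvT (neg_nonpos.2 (le_max_right _ _))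
    _ = _ := by
        rw [mul_assoc δ, ← rpow_add hL0]
        ring_nf

/-- Along each line `l = const` with `l ∈ [N, 2 * N]`, the bound `g * u ≤ F u` fails for a set of
times of measure at most `1 / 2` only. -/
def DominatesLinear (F : ℝ → ℝ) (u : ℝ → ℝ → ℝ) (g N : ℝ) : Prop :=
  ∀ l ∈ Icc N (2 * N),
    volume {τ ∈ Ico l (3 * N) | F (u τ l) < g * u τ l} ≤ ENNReal.ofReal (1 / 2)

/-- Along most of each line `l = const` the solution is small, and then the logarithmic lower bound
on `F` makes the equation look linear with a potential of polynomial size. -/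
lemma eventually_dominatesLinear {c γ α R : ℝ} (hc : 0 < c)
    (hF : ∀ v T, 0 < v → v < δ → log (1 / v) ≤ T → γ * T ^ (-α) * v ≤ F v)
    (hlow : ∀ t r, R < t → 0 < r → r ≤ t → c * exp (-(t / 2)) ≤ u t r)
    (hvol : ∀ᶠ N in atTop, ∀ l ∈ Icc N (2 * N),
      volume {τ ∈ Ioo 0 (3 * N) | δ ≤ u τ l} ≤ ENNReal.ofReal (1 / 2)) :
    ∀ᶠ N in atTop, DominatesLinear F u (γ * (3 * N) ^ (-α)) N := by
  filter_upwards [hvol, eventually_gt_atTop (max R 0), eventually_ge_atTop (log (1 / c))]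
    with N hN hRN hcN l hl
  obtain ⟨hRN, hN0⟩ := max_lt_iff.1 hRN
  refine (measure_mono ?_).trans (hN l hl)
  rintro τ ⟨⟨hlτ, hτN⟩, hτ⟩
  refine ⟨⟨by linarith [hl.1], hτN⟩, not_lt.1 fun hδ => hτ.not_ge ?_⟩
  have hlower := hlow τ l (by linarith [hl.1]) (by linarith [hl.1]) hlτ
  have hu : 0 < u τ l := lt_of_lt_of_le (by positivity) hlower
  refine hF _ _ hu hδ ?_
  calc log (1 / u τ l) ≤ log (1 / (c * exp (-(τ / 2)))) := by gcongr
    _ = log (1 / c) + τ / 2 := by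
        rw [one_div, mul_inv, ← exp_neg, neg_neg, ← one_div, log_mul (by positivity)
          (exp_pos _).ne', log_exp]
    _ ≤ 3 * N := by linarith

end WeakNonlinearity

section Growth

variable {A C N R T c g h l x y α γ : ℝ} {F : ℝ → ℝ} {u : ℝ → ℝ → ℝ} {ν : Measure (ℝ × ℝ)}

/-- `u` is at least `A * exp (-(r / 2))` between the outgoing characteristics `t - r = x` and
`t - r = y`, beyond the radius `R`. -/
def OutgoingLowerBound (u : ℝ → ℝ → ℝ) (A R x y : ℝ) : Prop :=
  ∀ t r, R ≤ r → x ≤ t - r → t - r ≤ y → A * exp (-(r / 2)) ≤ u t r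

/-- The points `(τ, l)` with `R < l < R + h` between the outgoing characteristics `τ - l = x` and
`τ - l = y`. -/
def outgoingStrip (R h x y : ℝ) : Set (ℝ × ℝ) :=
  {z | z.2 ∈ Ioo R (R + h) ∧ z.1 ∈ Ioo (z.2 + x) (z.2 + y)}

lemma measurableSet_outgoingStrip : MeasurableSet (outgoingStrip R h x y) := by
  unfold outgoingStrip
  simp only [mem_Ioo]
  measurability

lemma setLIntegral_outgoingStrip {f : ℝ × ℝ → ENNReal} (hf : Measurable f) :
    ∫⁻ z in outgoingStrip R h x y, f z =
      ∫⁻ l in Ioo R (R + h), ∫⁻ τ in Ioo (l + x) (l + y), f (τ, l) := by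
  rw [← lintegral_indicator measurableSet_outgoingStrip, Measure.volume_eq_prod,
    lintegral_prod_symm _ (hf.indicator measurableSet_outgoingStrip).aemeasurable,
    ← lintegral_indicator measurableSet_Ioo]
  refine lintegral_congr fun l => ?_
  by_cases hl : l ∈ Ioo R (R + h)
  · rw [indicator_of_mem hl, ← lintegral_indicator measurableSet_Ioo]
    refine lintegral_congr fun τ => ?_
    simp only [indicator, outgoingStrip, mem_ofPred_eq, hl, true_and]
  · simp only [indicator, outgoingStrip, mem_ofPred_eq, hl, false_and, if_false, lintegral_zero]

lemma le_lintegral_Ioo_of_volume_lt_le (hF : Measurable F) (hu : Measurable (uncurry u))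
    (hl : 1 ≤ l) (hg : 0 ≤ g) (hA : 0 ≤ A) (hx : 0 ≤ x) (hxy : x + 1 ≤ y) (hyT : l + y ≤ T)
    (hgood : volume {τ ∈ Ico l T | F (u τ l) < g * u τ l} ≤ ENNReal.ofReal (1 / 2))
    (hlow : ∀ τ ∈ Ioo (l + x) (l + y), A * exp (-(l / 2)) ≤ u τ l) :
    ENNReal.ofReal (g * A / 4 * ((y - x) / 2)) ≤
      ∫⁻ τ in Ioo (l + x) (l + y),
        ENNReal.ofReal (F (u τ l)) * ENNReal.ofReal (areaWeight l) := by
  set B := {τ ∈ Ico l T | F (u τ l) < g * u τ l}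
  have hw := areaWeight_pos (zero_lt_one.trans_le hl)
  have hAw : A / 4 ≤ A * exp (-(l / 2)) * areaWeight l := by
    calc A / 4 ≤ A * (sinh l * exp (-l)) := by
          linarith [mul_le_mul_of_nonneg_left (one_div_four_le_sinh_mul_exp_neg hl) hA]
      _ = A * exp (-(l / 2)) * areaWeight l := by
          rw [areaWeight, show -l = -(l / 2) + -(l / 2) by ring, exp_add]
          ring
  calc ENNReal.ofReal (g * A / 4 * ((y - x) / 2))
      = ENNReal.ofReal (g * A / 4) * ENNReal.ofReal ((y - x) / 2) :=
        ENNReal.ofReal_mul (by positivity)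
    _ ≤ ENNReal.ofReal (g * A / 4) * volume (Ioo (l + x) (l + y) \ B) := by
        gcongr
        refine le_trans ?_ le_measure_sdiff
        refine le_trans ?_ (tsub_le_tsub_left hgood _)
        rw [volume_Ioo, ← ENNReal.ofReal_sub _ (by norm_num)]
        exact ENNReal.ofReal_le_ofReal (by linarith)
    _ = ∫⁻ _ in Ioo (l + x) (l + y) \ B, ENNReal.ofReal (g * A / 4) :=
        (setLIntegral_const _ _).symm
    _ ≤ ∫⁻ τ in Ioo (l + x) (l + y) \ B,
          ENNReal.ofReal (F (u τ l)) * ENNReal.ofReal (areaWeight l) := by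
        refine setLIntegral_mono (by fun_prop) fun τ ⟨hτ, hτB⟩ => ?_
        have hFτ : g * u τ l ≤ F (u τ l) :=
          not_lt.1 fun hlt => hτB ⟨⟨by linarith [hτ.1], by linarith [hτ.2]⟩, hlt⟩
        rw [← ENNReal.ofReal_mul' hw.le]
        refine ENNReal.ofReal_le_ofReal ?_
        calc g * A / 4 = g * (A / 4) := by ring
          _ ≤ g * (u τ l * areaWeight l) := by
              gcongr
              exact hAw.trans (by gcongr; exact hlow τ hτ)
          _ ≤ F (u τ l) * areaWeight l := by
              rw [← mul_assoc]
              gcongr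
    _ ≤ _ := lintegral_mono_set sdiff_subset

lemma OutgoingLowerBound.le_areaMass (hlow : OutgoingLowerBound u A R x y)
    (hle : sourceMeasure F u ≤ ν) (hF : Measurable F) (hu : Measurable (uncurry u))
    (hgood : DominatesLinear F u g N) (hN : 1 ≤ N) (hg : 0 ≤ g) (hA : 0 ≤ A) (hR : N ≤ R)
    (hRh : R + h ≤ 2 * N) (hx : 0 ≤ x) (hxy : x + 1 ≤ y) (hy : y ≤ N) :
    ENNReal.ofReal (g * A * (y - x) * h / 8) ≤ areaMass ν (outgoingStrip R h x y) := by
  have : 0 ≤ y - x := by linarith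
  calc ENNReal.ofReal (g * A * (y - x) * h / 8)
      = ∫⁻ _ in Ioo R (R + h), ENNReal.ofReal (g * A / 4 * ((y - x) / 2)) := by
        rw [setLIntegral_const, volume_Ioo, ← ENNReal.ofReal_mul (by positivity)]
        ring_nf
    _ ≤ ∫⁻ l in Ioo R (R + h), ∫⁻ τ in Ioo (l + x) (l + y),
          ENNReal.ofReal (F (u τ l)) * ENNReal.ofReal (areaWeight l) := by
        refine setLIntegral_mono' measurableSet_Ioo fun l hl => ?_
        refine le_lintegral_Ioo_of_volume_lt_le hF hu (by linarith [hl.1]) hg hA hx hxy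
          (by linarith [hl.2]) (hgood l ⟨by linarith [hl.1], by linarith [hl.2]⟩) fun τ hτ => ?_
        exact hlow τ l hl.1.le (by linarith [hτ.1]) (by linarith [hτ.2])
    _ = areaMass (sourceMeasure F u) (outgoingStrip R h x y) := by
        rw [areaMass_sourceMeasure hF hu measurableSet_outgoingStrip fun z hz => by
          linarith [hz.1.1, hz.2.1], setLIntegral_outgoingStrip (by fun_prop)]
    _ ≤ areaMass ν (outgoingStrip R h x y) := areaMass_mono hle measurableSet_outgoingStrip

lemma OutgoingLowerBound.step (hlow : OutgoingLowerBound u A R x y)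
    (hν : IsRetardedPotential ν u) (hle : sourceMeasure F u ≤ ν) (hF : Measurable F)
    (hu : Measurable (uncurry u)) (hgood : DominatesLinear F u g N) (hN : 1 ≤ N)
    (hg : 0 < g) (hA : 0 < A) (hR : N ≤ R) (hh : 0 < h) (hRh : R + h ≤ 2 * N) (hx : 0 ≤ x)
    (hxy : x + 1 ≤ y) (hy : y ≤ N) :
    OutgoingLowerBound u (g * A * (y - x) * h / 32) (R + h) y N := by
  intro t r hr hyt htN
  have : 0 < y - x := by linarith
  refine le_of_eq_of_le (by ring) (hν.exp_mul_le (m := g * A * (y - x) * h / 8) (by linarith)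
    (by linarith) le_rfl measurableSet_outgoingStrip ?_ (by positivity)
    (hlow.le_areaMass hle hF hu hgood hN hg.le hA.le hR hRh hx hxy hy))
  rintro z ⟨hz1, hz2⟩
  simp only [mem_Ioo] at hz1 hz2
  exact ⟨by linarith, abs_lt.2 ⟨by linarith, by linarith⟩, by linarith⟩

/-- The interval `[N, 2 * N]` of radii is cut into `n + 2` windows of length `h`; each of them
multiplies the amplitude by `g * h ^ 2 / 32`. -/
lemma OutgoingLowerBound.iterate {n : ℕ} (hlow : OutgoingLowerBound u A N 0 1)
    (hν : IsRetardedPotential ν u) (hle : sourceMeasure F u ≤ ν) (hF : Measurable F)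
    (hu : Measurable (uncurry u)) (hgood : DominatesLinear F u g N)
    (hNh : N = (n + 2) * h) (hh : 1 ≤ h) (hg : 0 < g) (hA : 0 < A) {j : ℕ} (hj : j ≤ n) :
    OutgoingLowerBound u (g * A * h / 32 * (g * h ^ 2 / 32) ^ j) (N + (j + 1) * h)
      ((j + 1) * h) N := by
  have hn0 : 0 ≤ n * h := by positivity
  induction j with
  | zero =>
    intro t r hr hxt htN
    simp only [Nat.cast_zero, zero_add, one_mul] at hr hxt
    refine le_of_eq_of_le (by ring) (hlow.step hν hle hF hu hgood (h := h) (by linarith) hg hA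
      le_rfl (by linarith) (by linarith) le_rfl (by simp) (by linarith) t r hr (by linarith) htN)
  | succ j ih =>
    have hjn : ((j : ℝ) + 1) * h ≤ n * h := by gcongr; exact_mod_cast hj
    have hj0 : 0 ≤ (j + 1) * h := by positivity
    have hih : OutgoingLowerBound u (g * A * h / 32 * (g * h ^ 2 / 32) ^ j) (N + (j + 1) * h)
        ((j + 1) * h) ((j + 2) * h) :=
      fun t r hr hxt htN => ih (by lia) t r hr hxt (by linarith)
    have hstep := hih.step hν hle hF hu hgood (h := h) (by linarith) hg (by positivity)
      (by linarith) (by linarith) (by linarith) hj0 (by linarith) (by linarith)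
    convert hstep using 1 <;> push_cast <;> ring

lemma OutgoingLowerBound.le_areaMass_incomingStrip {n : ℕ}
    (hlow : OutgoingLowerBound u A N 0 1) (hν : IsRetardedPotential ν u)
    (hle : sourceMeasure F u ≤ ν) (hF : Measurable F) (hu : Measurable (uncurry u))
    (hgood : DominatesLinear F u g N) (hNh : N = (n + 2) * h) (hh : 1 ≤ h) (hg : 0 < g)
    (hA : 0 < A) :
    ENNReal.ofReal (4 * A * (g * h ^ 2 / 32) ^ (n + 2) / h) ≤
      areaMass ν (incomingStrip 0 (5 * N)) := by
  have hn0 : 0 ≤ n * h := by positivity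
  have hmass := (hlow.iterate hν hle hF hu hgood hNh hh hg hA le_rfl).le_areaMass hle hF hu hgood
    (h := h) (by linarith) hg.le (by positivity) (by linarith) (by linarith) (by positivity)
    (by linarith) le_rfl
  calc ENNReal.ofReal (4 * A * (g * h ^ 2 / 32) ^ (n + 2) / h) = _ := by
        rw [show N - (n + 1) * h = h by rw [hNh]; ring]
        congr 1
        field_simp
        ring
    _ ≤ _ := hmass
    _ ≤ _ := by
        refine measure_mono fun z ⟨hz1, hz2⟩ => ?_
        simp only [mem_Ioo] at hz1 hz2
        exact ⟨⟨by linarith, by linarith⟩, by linarith, by linarith⟩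

lemma exists_eventually_lt_pow_div (hα : α < 2) (hγ : 0 < γ) (hA : 0 < A) (hC : 0 < C) :
    ∃ n : ℕ, ∀ᶠ h : ℝ in atTop, C * (5 * ((n + 2) * h) + 1) <
      4 * A * (γ * (3 * ((n + 2) * h)) ^ (-α) * h ^ 2 / 32) ^ (n + 2) / h := by
  obtain ⟨n, hn⟩ := exists_nat_gt (3 / (2 - α))
  rw [div_lt_iff₀ (by linarith)] at hn
  set b := γ * (3 * (n + 2)) ^ (-α) / 32
  have hb : 0 < b := by positivity
  refine ⟨n, ?_⟩
  filter_upwards [eventually_ge_atTop 1,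
    eventually_gt_atTop (C * (5 * (n + 2) + 1) / (4 * A * b ^ (n + 2)))] with h hh hbig
  have hh0 : 0 < h := by linarith
  have hbh : γ * (3 * ((n + 2) * h)) ^ (-α) * h ^ 2 / 32 = b * h ^ (2 - α) := by
    rw [← mul_assoc 3, mul_rpow (by positivity) hh0.le, sub_eq_neg_add, rpow_add hh0, rpow_two]
    ring
  have hpow : h ^ 3 ≤ (h ^ (2 - α)) ^ (n + 2) := by
    rw [← rpow_mul_natCast hh0.le, ← rpow_natCast]
    refine rpow_le_rpow_of_exponent_le hh ?_
    push_cast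
    linarith
  rw [div_lt_iff₀ (by positivity)] at hbig
  calc C * (5 * ((n + 2) * h) + 1) ≤ C * (5 * ((n + 2) * h) + h) := by gcongr
    _ = C * (5 * (n + 2) + 1) * h := by ring
    _ < h * (4 * A * b ^ (n + 2)) * h := by gcongr
    _ = 4 * A * (b ^ (n + 2) * h ^ 3) / h := by field_simp
    _ ≤ 4 * A * (b ^ (n + 2) * (h ^ (2 - α)) ^ (n + 2)) / h := by gcongr
    _ = _ := by rw [hbh, mul_pow]

lemma IsRetardedPotential.exists_lt_areaMass_incomingStrip (hν : IsRetardedPotential ν u)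
    (hle : sourceMeasure F u ≤ ν) (hF : Measurable F) (hu : Measurable (uncurry u)) (hc : 0 < c)
    (hlow : ∀ t r, R < t → 0 < r → r ≤ t → c * exp (-(t / 2)) ≤ u t r) (hγ : 0 < γ) (hα : α < 2)
    (hgood : ∀ᶠ N in atTop, DominatesLinear F u (γ * (3 * N) ^ (-α)) N) (hC : 0 < C) :
    ∃ x ≥ 0, ENNReal.ofReal (C * (x + 1)) < areaMass ν (incomingStrip 0 x) := by
  set A := c * exp (-(1 / 2))
  have hA : 0 < A := by positivity
  obtain ⟨n, hn⟩ := exists_eventually_lt_pow_div hα hγ hA hC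
  have hN : Tendsto (fun h : ℝ => (n + 2) * h) atTop atTop :=
    tendsto_id.const_mul_atTop (by positivity)
  obtain ⟨h, hlt, hgood, hNR, hh⟩ := (hn.and ((hN.eventually hgood).and
    ((hN.eventually_gt_atTop R).and (eventually_ge_atTop 1)))).exists
  have hout : OutgoingLowerBound u A ((n + 2) * h) 0 1 := by
    intro t r hr htr htr1
    have : 0 < (n + 2) * h := by positivity
    refine le_trans ?_ (hlow t r (by linarith) (by linarith) (by linarith))
    rw [mul_assoc, ← exp_add]
    gcongr
    linarith
  refine ⟨5 * ((n + 2) * h), by positivity, lt_of_lt_of_le ?_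
    (hout.le_areaMass_incomingStrip hν hle hF hu hgood rfl hh (by positivity) hA)⟩
  exact (ENNReal.ofReal_lt_ofReal_iff (by positivity)).2 hlt

end Growth

end ShiftedWave

open ShiftedWave in
theorem blow_up_in_finite_time_general {p q δ : ℝ} (hp : p < 3) (hq : 1 < q) {F φ : ℝ → ℝ}
    (hF : Continuous F) (hF0 : ∀ v, 0 ≤ F v) (hδ : 0 < δ) (hδ1 : δ < 1)
    (hFsmall : ∀ v, 0 < v → v < δ → δ * Real.log (1 / v) ^ (1 - p) * v ≤ F v)
    (hFlarge : ∀ v, 1 / δ < v → δ * v ^ q ≤ F v)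
    (hφ : Continuous φ) (hφ0 : ∀ l, 0 ≤ φ l) (hφpos : ∃ l > 0, 0 < φ l) :
    ¬∃ u, IsMildSolution F φ u := by
  rintro ⟨u₀, hu₀⟩
  obtain ⟨u, huc, hu⟩ := hu₀.exists_continuous
  have hν := hu.isRetardedPotential huc hF hF0 hφ hφ0
  have hdata := Measure.le_add_right (le_refl (dataMeasure φ)) (ν' := sourceMeasure F u)
  have hsource := Measure.le_add_left (le_refl (sourceMeasure F u)) (ν' := dataMeasure φ)
  have hFm := hF.measurable
  have hum := huc.measurable
  obtain ⟨c, hc, R, hlow⟩ := hν.exists_exp_le hdata hφ hφpos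
  obtain ⟨C, hC, hstrip⟩ := hν.exists_areaMass_incomingStrip_le
    (hν.exists_not_forall_le hsource hFm hum hq hδ hFlarge)
  have hmass := fun x hx => areaMass_incomingStrip_zero_le hC.le hstrip (x := x) hx
  obtain ⟨D, hD, hint⟩ := hν.exists_lintegral_Ioo_le hC hmass
  obtain ⟨γ, hγ, α, hα, hFlin⟩ := exists_mul_rpow_neg_mul_le hp hδ hδ1 hFsmall
  have hgood := eventually_dominatesLinear hc hFlin hlow
    (eventually_volume_setOf_le hum hδ hD hint)
  obtain ⟨x, hx, hlt⟩ :=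
    hν.exists_lt_areaMass_incomingStrip hsource hFm hum hc hlow hγ hα hgood hC
  exact (hmass x hx).not_gt hlt

theorem blow_up_in_finite_time (p q : ℝ) (hp1 : 1 < p) (hp3 : p < 3) (hq : 1 < q)
    (F : ℝ → ℝ) (hF : ContDiff ℝ 1 F) (hFnn : ∀ u : ℝ, 0 ≤ F u)
    (hF0 : F 0 = 0) (hF0' : deriv F 0 = 0)
    (δ₀ : ℝ) (hδ₀pos : 0 < δ₀) (hδ₀lt : δ₀ < 1)
    (hFsmall : ∀ u : ℝ, 0 < |u| → |u| < δ₀ →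
      F u ≥ δ₀ * Real.log (1 / |u|) ^ (1 - p) * |u|)
    (hFlarge : ∀ u : ℝ, 1 / δ₀ < |u| → F u ≥ δ₀ * |u| ^ q)
    (τ₀ : ℝ) (hτ₀ : 0 < τ₀)
    (u₁ : ℝ → ℝ) (hu₁c : Continuous u₁) (hu₁nn : ∀ l : ℝ, 0 ≤ u₁ l)
    (hu₁supp : HasCompactSupport u₁)
    (hu₁ge : ∀ l ∈ Set.Icc τ₀ (3 * τ₀), 1 ≤ u₁ l)
    (ε : ℝ) (hε : 0 < ε) :
    ¬ ∃ u : ℝ → ℝ → ℝ,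
      ContinuousOn (Function.uncurry u) (Set.Ici 0 ×ˢ Set.Ici 0) ∧
      ∀ t : ℝ, 0 ≤ t → ∀ r : ℝ, 0 < r →
        u t r = ε * Isol t r u₁ +
          ∫ τ in (0 : ℝ)..t, Isol (t - τ) r (fun l => F (u τ l)) := by
  rintro ⟨u, hu, heq⟩
  refine blow_up_in_finite_time_general (φ := fun l => ε * u₁ l) hp3 hq hF.continuous hFnn
    hδ₀pos hδ₀lt (fun v hv => by simpa [abs_of_pos hv, hv] using hFsmall v) (fun v hv => ?_)
    (by fun_prop) (fun l => mul_nonneg hε.le (hu₁nn l)) ⟨τ₀, hτ₀, mul_pos hε ?_⟩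
    ⟨u, hu, fun t ht r hr => by rw [ShiftedWave.Isol_const_mul, heq t ht r hr]⟩
  · have hv0 : 0 < v := (one_div_pos.2 hδ₀pos).trans hv
    simpa only [abs_of_pos hv0] using hFlarge v (by rwa [abs_of_pos hv0])
  · exact one_pos.trans_le (hu₁ge τ₀ ⟨le_rfl, by linarith⟩)
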